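/- arXiv:2302.09623 — 2 statements merged into one kernel-verified Lean document; each statement's English description precedes it below -/
import Mathlib

section
/- Let p = 1 or p = ∞, let F : 𝕋 → ℂ be absolutely continuous with Ḟ ∈ L^p(𝕋), and let f = P[F] be its Poisson integral. Then the function z = re^{iθ} ↦ r f_r(z) belongs to the harmonic Hardy space h^p(𝔻) if and only if the Hilbert transform H(Ḟ) belongs to L^p(𝕋). -/
open MeasureTheory Complex Metric Set Filter
open scoped Real Topology ENNReal

noncomputable section

/-- The Poisson kernel `P(z) = (1-|z|^2)/|1-z|^2`. -/
def poissonKer (z : ℂ) : ℝ := (1 - ‖z‖ ^ 2) / ‖1 - z‖ ^ 2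

/-- The Poisson integral of a boundary function `F` defined on the unit circle. -/
def poissonInt (F : ℂ → ℂ) (z : ℂ) : ℂ :=
  (1 / (2 * π)) * ∫ t in (0:ℝ)..(2 * π),
    (poissonKer (z * Complex.exp (-(t : ℂ) * Complex.I)) : ℂ) *
      F (Complex.exp ((t : ℂ) * Complex.I))

/-- The Poisson integral of a (2π-periodic) function of the angular variable. -/
def poissonIntR (φ : ℝ → ℂ) (z : ℂ) : ℂ :=
  (1 / (2 * π)) * ∫ t in (0:ℝ)..(2 * π),
    (poissonKer (z * Complex.exp (-(t : ℂ) * Complex.I)) : ℂ) * φ t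

/-- The conjugate Poisson kernel `P̃(z) = Im((1+z)/(1-z))`. -/
def conjPoissonKer (z : ℂ) : ℝ := ((1 + z) / (1 - z)).im

/-- The conjugate Poisson integral of a function of the angular variable. -/
def conjPoissonIntR (φ : ℝ → ℂ) (z : ℂ) : ℂ :=
  (1 / (2 * π)) * ∫ t in (0:ℝ)..(2 * π),
    (conjPoissonKer (z * Complex.exp (-(t : ℂ) * Complex.I)) : ℂ) * φ t

/-- Wirtinger derivative `f_z = (1/2)(∂ₓ - i ∂_y) f`. -/
def wdz (f : ℂ → ℂ) (z : ℂ) : ℂ :=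
  (1 / 2) * (fderiv ℝ f z 1 - Complex.I * fderiv ℝ f z Complex.I)

/-- Wirtinger derivative `f_z̄ = (1/2)(∂ₓ + i ∂_y) f`. -/
def wdzb (f : ℂ → ℂ) (z : ℂ) : ℂ :=
  (1 / 2) * (fderiv ℝ f z 1 + Complex.I * fderiv ℝ f z Complex.I)

/-- The angular derivative `f_θ(z) = i (z f_z(z) - z̄ f_z̄(z))`. -/
def fTheta (f : ℂ → ℂ) (z : ℂ) : ℂ :=
  Complex.I * (z * wdz f z - (starRingEnd ℂ) z * wdzb f z)

/-- The radial derivative multiplied by `r`: `r f_r(z) = z f_z(z) + z̄ f_z̄(z)`. -/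
def rFr (f : ℂ → ℂ) (z : ℂ) : ℂ :=
  z * wdz f z + (starRingEnd ℂ) z * wdzb f z

/-- `F : 𝕋 → ℂ` is absolutely continuous with angular derivative `Ḟ = Fd`,
i.e. `t ↦ F(e^{it})` is an indefinite integral of the (locally integrable,
2π-periodic) function `Fd`. -/
def IsACDeriv (F : ℂ → ℂ) (Fd : ℝ → ℂ) : Prop :=
  (∀ a b : ℝ, IntervalIntegrable Fd MeasureTheory.volume a b) ∧
  Function.Periodic Fd (2 * π) ∧
  ∀ t : ℝ, F (Complex.exp ((t : ℂ) * Complex.I)) = F 1 + ∫ s in (0:ℝ)..t, Fd s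

/-- membership in `L^p(𝕋)`, identifying `𝕋` with `[0, 2π)`. -/
def MemLpT (p : ℝ≥0∞) (φ : ℝ → ℂ) : Prop :=
  MeasureTheory.MemLp φ p (MeasureTheory.volume.restrict (Ioc (0:ℝ) (2 * π)))

/-- The integral mean `M_p(r, g)`. -/
def Mp (p : ℝ) (g : ℂ → ℂ) (r : ℝ) : ℝ :=
  ((1 / (2 * π)) * ∫ θ in (0:ℝ)..(2 * π),
      ‖g ((r : ℂ) * Complex.exp ((θ : ℂ) * Complex.I))‖ ^ p) ^ (1 / p)

/-- The `L^p(𝕋)` norm `((1/2π) ∫ |φ|^p)^{1/p}`. -/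
def lpNormT (p : ℝ) (φ : ℝ → ℂ) : ℝ :=
  ((1 / (2 * π)) * ∫ t in (0:ℝ)..(2 * π), ‖φ t‖ ^ p) ^ (1 / p)

/-- Membership in the analytic Hardy space `H^p(𝔻)` for `p ∈ [1, ∞)`. -/
def MemHp (p : ℝ) (g : ℂ → ℂ) : Prop :=
  DifferentiableOn ℂ g (ball (0:ℂ) 1) ∧ ∃ M : ℝ, ∀ r ∈ Ioo (0:ℝ) 1, Mp p g r ≤ M

/-- Membership in `H^∞(𝔻)`: bounded analytic functions on the unit disk. -/
def MemHinf (g : ℂ → ℂ) : Prop :=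
  DifferentiableOn ℂ g (ball (0:ℂ) 1) ∧ ∃ M : ℝ, ∀ z ∈ ball (0:ℂ) 1, ‖g z‖ ≤ M

/-- Harmonicity on the unit disk: `f` is C² with vanishing Laplacian. -/
def HarmonicOnD (f : ℂ → ℂ) : Prop :=
  ContDiffOn ℝ 2 f (ball (0:ℂ) 1) ∧
  ∀ z ∈ ball (0:ℂ) 1,
    fderiv ℝ (fun w => fderiv ℝ f w 1) z 1
      + fderiv ℝ (fun w => fderiv ℝ f w Complex.I) z Complex.I = 0

/-- Membership in the harmonic Hardy space `h^p(𝔻)` for `p ∈ [1, ∞)`. -/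
def Memhp (p : ℝ) (g : ℂ → ℂ) : Prop :=
  HarmonicOnD g ∧ ∃ M : ℝ, ∀ r ∈ Ioo (0:ℝ) 1, Mp p g r ≤ M

/-- Membership in `h^∞(𝔻)`: bounded harmonic functions on the unit disk. -/
def Memhinf (g : ℂ → ℂ) : Prop :=
  HarmonicOnD g ∧ ∃ M : ℝ, ∀ z ∈ ball (0:ℂ) 1, ‖g z‖ ≤ M

/-- `L` is the value of the principal-value Hilbert transform
`(1/2π) p.v. ∫ φ(t)/tan((θ-t)/2) dt` of (the 2π-periodic) `φ` at `θ`. -/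
def IsPVHilbert (φ : ℝ → ℂ) (θ : ℝ) (L : ℂ) : Prop :=
  Filter.Tendsto
    (fun ε : ℝ => (1 / (2 * π)) *
      ∫ t in Ioo (θ - π) (θ + π) \ Ioo (θ - ε) (θ + ε),
        φ t / (Real.tan ((θ - t) / 2) : ℂ))
    (nhdsWithin 0 (Ioi 0)) (nhds L)

/-!
Integrating by parts against the Herglotz kernel shows that `r f_r` is the conjugate Poisson
integral of `Ḟ`. At a Lebesgue point the conjugate Poisson kernel at `r e^{ix}` differs from
`cot (x / 2)` truncated at distance `1 - r` by an odd kernel of Poisson size, so the radial limits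
of `r f_r` are a.e. the values of `H(Ḟ)`, and Fatou's lemma turns `r f_r ∈ h^p` into
`H(Ḟ) ∈ L^p`.

For the converse, rotate so that `r f_r` is real at the given point, and split the rotated real part
of `Ḟ` into positive and negative parts. The Schwarz integrals `h₁`, `h₂` of the two parts have
nonnegative real part, so `(h₁ - h₂) / ((1 + ε h₁) (1 + ε h₂))` is bounded and holomorphic. Bounding
it by its boundary values and letting `ε → 0` gives `|r f_r| ≤ P[|Ḟ| + |H(Ḟ)|]`, and Poisson
integrals of `L^p` functions are in `h^p`.
-/

open scoped ComplexConjugate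

section Herglotz

variable {z : ℂ} {φ : ℝ → ℂ}

/-- The Herglotz kernel `(e^{it} + z) / (e^{it} - z)` of the unit disk in the angular variable `t`.
Its real and imaginary parts are the Poisson and the conjugate Poisson kernels. -/
def herglotzKer (z : ℂ) (t : ℝ) : ℂ := herglotzRieszKernel 0 z (circleMap 0 1 t)

/-- The Schwarz integral of a function of the angular variable. For real `φ` it is the holomorphic
function whose real part is the Poisson integral and whose imaginary part is the conjugate Poisson
integral of `φ`. -/
def schwarzInt (φ : ℝ → ℂ) (z : ℂ) : ℂ :=
  (1 / (2 * π)) * ∫ t in (0 : ℝ)..(2 * π), herglotzKer z t * φ t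

lemma herglotzKer_eq_div (z : ℂ) (t : ℝ) :
    herglotzKer z t = (circleMap 0 1 t + z) / (circleMap 0 1 t - z) := by
  simp only [herglotzKer, herglotzRieszKernel_def, sub_zero]

lemma herglotzKer_eq_div_one_sub (z : ℂ) (t : ℝ) : herglotzKer z t =
    (1 + z * cexp (-(t : ℂ) * I)) / (1 - z * cexp (-(t : ℂ) * I)) := by
  have h : cexp (-(t : ℂ) * I) = (circleMap 0 1 t)⁻¹ := by
    rw [neg_mul, Complex.exp_neg, circleMap_zero, ofReal_one, one_mul]
  have h0 : circleMap 0 1 t ≠ 0 := circleMap_ne_center one_ne_zero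
  rw [h, herglotzKer_eq_div, ← mul_div_mul_left _ (1 - z * (circleMap 0 1 t)⁻¹) h0]
  congr 1 <;> field_simp

lemma herglotzKer_im (z : ℂ) (t : ℝ) :
    (herglotzKer z t).im = conjPoissonKer (z * cexp (-(t : ℂ) * I)) := by
  rw [herglotzKer_eq_div_one_sub, conjPoissonKer]

lemma herglotzKer_re (z : ℂ) (t : ℝ) :
    (herglotzKer z t).re = poissonKer (z * cexp (-(t : ℂ) * I)) := by
  rw [herglotzKer_eq_div_one_sub, poissonKer]
  generalize z * cexp (-(t : ℂ) * I) = w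
  have := congrFun (poissonKernel_eq_re_herglotzRieszKernel (c := 0) (w := w)) 1
  simpa [poissonKernel, herglotzRieszKernel] using this.symm

lemma circleMap_sub_ne_zero (hz : ‖z‖ < 1) (t : ℝ) : circleMap 0 1 t - z ≠ 0 :=
  sub_ne_zero.2 (circleMap_ne_mem_ball (by simpa using hz) t)

lemma continuous_herglotzKer (hz : ‖z‖ < 1) : Continuous (herglotzKer z) := by
  simp only [funext (herglotzKer_eq_div z)]
  exact .div (by fun_prop) (by fun_prop) (circleMap_sub_ne_zero hz)

lemma herglotzKer_re_nonneg (hz : ‖z‖ < 1) (t : ℝ) : 0 ≤ (herglotzKer z t).re := by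
  have h := le_re_herglotzRieszKernel (circleMap_mem_sphere 0 zero_le_one t)
    (show z ∈ ball 0 1 by simpa using hz)
  exact (div_nonneg (by simpa using hz.le) (by positivity)).trans h

lemma exists_comp_circleMap_eq (φ : ℝ → ℂ) :
    ∃ g : ℂ → ℂ, ∀ t ∈ Ioc 0 (2 * π), g (circleMap 0 1 t) = φ t := by
  have hinj : InjOn (circleMap 0 1) (Ioc 0 (2 * π)) := by
    simpa [uIoc_of_le Real.two_pi_pos.le] using injOn_circleMap_of_abs_sub_le (a := 0) (b := 2 * π)
      (c := 0) one_ne_zero (by simp [abs_of_pos Real.pi_pos])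
  exact ⟨φ ∘ Function.invFunOn (circleMap 0 1) (Ioc 0 (2 * π)), fun t ht ↦
    congrArg φ (hinj.leftInvOn_invFunOn ht)⟩

lemma intervalIntegral_congr_Ioc {f g : ℝ → ℂ} (h : ∀ t ∈ Ioc 0 (2 * π), f t = g t) :
    ∫ t in (0 : ℝ)..(2 * π), f t = ∫ t in (0 : ℝ)..(2 * π), g t :=
  intervalIntegral.integral_congr_ae (.of_forall fun t ht ↦
    h t (by rwa [uIoc_of_le Real.two_pi_pos.le] at ht))

lemma hasDerivAt_schwarzInt (hφ : IntervalIntegrable φ volume 0 (2 * π)) (hz : ‖z‖ < 1) :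
    HasDerivAt (schwarzInt φ) ((1 / (2 * π)) * ∫ t in (0 : ℝ)..(2 * π),
      2 * circleMap 0 1 t / (circleMap 0 1 t - z) ^ 2 * φ t) z := by
  obtain ⟨g, hg⟩ := exists_comp_circleMap_eq φ
  have hg' : CircleIntegrable g 0 1 := (intervalIntegrable_congr fun t ht ↦
    hg t (by rwa [uIoc_of_le Real.two_pi_pos.le] at ht)).2 hφ
  have avg (k : ℂ → ℂ) : Real.circleAverage (fun ζ ↦ k ζ • g ζ) 0 1 =
      (1 / (2 * π)) * ∫ t in (0 : ℝ)..(2 * π), k (circleMap 0 1 t) * φ t := by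
    rw [Real.circleAverage_def, real_smul, intervalIntegral_congr_Ioc fun t ht ↦ by
      rw [smul_eq_mul, hg t ht]]
    norm_num
  have h := hasDerivAt_circleAverage_herglotzRieszKernel_smul hg'
    (show z ∈ ball 0 1 by simpa using hz)
  simp only [avg] at h
  exact h

lemma differentiableOn_schwarzInt (hφ : IntervalIntegrable φ volume 0 (2 * π)) :
    DifferentiableOn ℂ (schwarzInt φ) (ball 0 1) := fun _ hw ↦
  (hasDerivAt_schwarzInt hφ (by simpa using hw)).differentiableAt.differentiableWithinAt

lemma hasDerivAt_herglotzKer (hz : ‖z‖ < 1) (t : ℝ) : HasDerivAt (herglotzKer z)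
    (-I * z * (2 * circleMap 0 1 t / (circleMap 0 1 t - z) ^ 2)) t := by
  have hc := hasDerivAt_circleMap 0 1 t
  have h := (hc.add_const z).div (hc.sub_const z) (circleMap_sub_ne_zero hz t)
  rw [funext (herglotzKer_eq_div z)]
  convert! h using 1
  ring

end Herglotz

section Conjugation

variable {φ : ℝ → ℂ} {a b : ℝ}

lemma intervalIntegrable_conj (h : IntervalIntegrable φ volume a b) :
    IntervalIntegrable (fun t ↦ conj (φ t)) volume a b :=
  ⟨conjCLE.toContinuousLinearMap.integrable_comp h.1,
    conjCLE.toContinuousLinearMap.integrable_comp h.2⟩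

lemma schwarzInt_add_conj (hφ : IntervalIntegrable φ volume 0 (2 * π)) {z : ℂ} (hz : ‖z‖ < 1)
    (c : ℂ) : c * schwarzInt φ z + conj (c * schwarzInt (fun t ↦ conj (φ t)) z) =
      (1 / (2 * π)) * ∫ t in (0 : ℝ)..(2 * π), ((2 * (c * herglotzKer z t).re : ℝ) : ℂ) * φ t := by
  have hK := continuous_herglotzKer hz
  have h1 : IntervalIntegrable (fun t ↦ c * (herglotzKer z t * φ t)) volume 0 (2 * π) :=
    (hφ.continuousOn_mul hK.continuousOn).const_mul c
  have h2 : IntervalIntegrable (fun t ↦ conj c * (conj (herglotzKer z t) * φ t)) volume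
      0 (2 * π) :=
    (hφ.continuousOn_mul (continuous_conj.comp hK).continuousOn).const_mul _
  have hsplit (t : ℝ) : ((2 * (c * herglotzKer z t).re : ℝ) : ℂ) * φ t =
      c * (herglotzKer z t * φ t) + conj c * (conj (herglotzKer z t) * φ t) := by
    rw [← add_conj, map_mul]
    ring
  simp only [hsplit]
  rw [intervalIntegral.integral_add h1 h2, intervalIntegral.integral_const_mul,
    intervalIntegral.integral_const_mul]
  simp only [schwarzInt, map_mul, ← intervalIntegral.intervalIntegral_conj, map_div₀, map_one,
    map_ofNat, conj_ofReal, conj_conj]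
  ring

lemma poissonInt_eq_add_conj {F : ℂ → ℂ}
    (hF : IntervalIntegrable (fun t : ℝ ↦ F (cexp (t * I))) volume 0 (2 * π)) {z : ℂ}
    (hz : ‖z‖ < 1) : poissonInt F z = 1 / 2 * schwarzInt (fun t : ℝ ↦ F (cexp (t * I))) z +
      conj (1 / 2 * schwarzInt (fun t : ℝ ↦ conj (F (cexp (t * I)))) z) := by
  rw [schwarzInt_add_conj hF hz, poissonInt]
  simp only [← herglotzKer_re]
  congr! 6 with t
  rw [one_div_mul_eq_div, div_ofNat_re]
  ring

lemma conjPoissonIntR_eq_add_conj (hφ : IntervalIntegrable φ volume 0 (2 * π)) {z : ℂ}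
    (hz : ‖z‖ < 1) : conjPoissonIntR φ z = -I / 2 * schwarzInt φ z +
      conj (-I / 2 * schwarzInt (fun t ↦ conj (φ t)) z) := by
  rw [schwarzInt_add_conj hφ hz, conjPoissonIntR]
  simp only [← herglotzKer_im]
  congr! 6 with t
  rw [div_mul_eq_mul_div, div_ofNat_re, neg_mul, neg_re, I_mul_re]
  ring

end Conjugation

section AddConj

variable {f A B : ℂ → ℂ} {z : ℂ}

lemma fderiv_apply_of_eq_add_conj {A' B' : ℂ} (hA : HasDerivAt A A' z) (hB : HasDerivAt B B' z)
    (hf : f =ᶠ[𝓝 z] fun w ↦ A w + conj (B w)) (v : ℂ) :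
    fderiv ℝ f z v = v * A' + conj (v * B') := by
  have h := (hA.hasFDerivAt.restrictScalars ℝ).add
    ((conjCLE.hasFDerivAt (x := B z)).comp z (hB.hasFDerivAt.restrictScalars ℝ))
  have hf' : f =ᶠ[𝓝 z] A + conjCLE ∘ B := hf
  rw [hf'.fderiv_eq, h.fderiv]
  simp

lemma rFr_of_eq_add_conj {A' B' : ℂ} (hA : HasDerivAt A A' z) (hB : HasDerivAt B B' z)
    (hf : f =ᶠ[𝓝 z] fun w ↦ A w + conj (B w)) : rFr f z = z * A' + conj (z * B') := by
  simp only [rFr, wdz, wdzb, fderiv_apply_of_eq_add_conj hA hB hf, map_mul, conj_I, map_one]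
  linear_combination (-z * A' / 2 + z * conj B' / 2 + conj z * A' / 2 - conj z * conj B' / 2) * I_sq

lemma harmonicOnD_of_eq_add_conj (hA : DifferentiableOn ℂ A (ball 0 1))
    (hB : DifferentiableOn ℂ B (ball 0 1)) (hf : ∀ z ∈ ball (0 : ℂ) 1, f z = A z + conj (B z)) :
    HarmonicOnD f := by
  have hderiv {G : ℂ → ℂ} (hG : DifferentiableOn ℂ G (ball 0 1)) {w : ℂ} (hw : w ∈ ball 0 1) :
      HasDerivAt G (deriv G w) w := (hG.differentiableAt (isOpen_ball.mem_nhds hw)).hasDerivAt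
  have hfirst (v : ℂ) {w : ℂ} (hw : w ∈ ball 0 1) :
      fderiv ℝ f w v = v * deriv A w + conj (v * deriv B w) :=
    fderiv_apply_of_eq_add_conj (hderiv hA hw) (hderiv hB hw)
      (eventually_of_mem (isOpen_ball.mem_nhds hw) hf) v
  have hsecond (v : ℂ) {w : ℂ} (hw : w ∈ ball 0 1) : fderiv ℝ (fun u ↦ fderiv ℝ f u v) w v =
      v * (v * deriv (deriv A) w) + conj (v * (v * deriv (deriv B) w)) :=
    fderiv_apply_of_eq_add_conj ((hderiv (hA.deriv isOpen_ball) hw).const_mul v)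
      ((hderiv (hB.deriv isOpen_ball) hw).const_mul v)
      (eventually_of_mem (isOpen_ball.mem_nhds hw) fun u hu ↦ hfirst v hu) v
  refine ⟨?_, fun z hz ↦ ?_⟩
  · have hsmooth {G : ℂ → ℂ} (hG : DifferentiableOn ℂ G (ball 0 1)) :
        ContDiffOn ℝ 2 G (ball 0 1) := (hG.contDiffOn isOpen_ball).restrict_scalars ℝ
    exact ((hsmooth hA).add (conjCLE.contDiff.comp_contDiffOn (hsmooth hB))).congr hf
  · rw [hsecond 1 hz, hsecond I hz]
    simp only [map_mul, map_one, conj_I]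
    linear_combination (deriv (deriv A) z + conj (deriv (deriv B) z)) * I_sq

lemma harmonicOnD_congr {g : ℂ → ℂ} (hf : HarmonicOnD f) (hg : EqOn g f (ball 0 1)) :
    HarmonicOnD g := by
  have hfirst (v : ℂ) : EqOn (fun w ↦ fderiv ℝ g w v) (fun w ↦ fderiv ℝ f w v) (ball 0 1) :=
    fun w hw ↦ by simp only [(hg.eventuallyEq_of_mem (isOpen_ball.mem_nhds hw)).fderiv_eq]
  refine ⟨hf.1.congr hg, fun z hz ↦ ?_⟩
  rw [((hfirst 1).eventuallyEq_of_mem (isOpen_ball.mem_nhds hz)).fderiv_eq,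
    ((hfirst I).eventuallyEq_of_mem (isOpen_ball.mem_nhds hz)).fderiv_eq]
  exact hf.2 z hz

end AddConj

section RadialDerivative

lemma integral_mul_integral_swap {u v : ℝ → ℂ} {a b : ℝ} (hab : a ≤ b)
    (hu : IntervalIntegrable u volume a b) (hv : IntervalIntegrable v volume a b) :
    ∫ t in a..b, u t * ∫ s in a..t, v s = ∫ s in a..b, (∫ t in s..b, u t) * v s := by
  rw [intervalIntegrable_iff_integrableOn_Ioc_of_le hab] at hu hv
  rw [intervalIntegral.integral_of_le hab, intervalIntegral.integral_of_le hab]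
  set T : Set (ℝ × ℝ) := {q | q.2 ≤ q.1}
  have hint : Integrable (T.indicator fun q ↦ u q.1 * v q.2)
      ((volume.restrict (Ioc a b)).prod (volume.restrict (Ioc a b))) :=
    (hu.mul_prod hv).indicator (measurableSet_le measurable_snd measurable_fst)
  calc ∫ t in Ioc a b, u t * ∫ s in a..t, v s
      = ∫ t in Ioc a b, ∫ s in Ioc a b, T.indicator (fun q ↦ u q.1 * v q.2) (t, s) := by
        refine setIntegral_congr_fun measurableSet_Ioc fun t ht ↦ ?_
        have (s : ℝ) : T.indicator (fun q ↦ u q.1 * v q.2) (t, s) =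
          (Iic t).indicator (fun s ↦ u t * v s) s := rfl
        simp only [this]
        rw [setIntegral_indicator measurableSet_Iic, Ioc_inter_Iic, min_eq_right ht.2,
          integral_const_mul, intervalIntegral.integral_of_le ht.1.le]
    _ = ∫ s in Ioc a b, ∫ t in Ioc a b, T.indicator (fun q ↦ u q.1 * v q.2) (t, s) :=
        integral_integral_swap hint
    _ = ∫ s in Ioc a b, (∫ t in s..b, u t) * v s := by
        refine setIntegral_congr_fun measurableSet_Ioc fun s hs ↦ ?_
        have (t : ℝ) : T.indicator (fun q ↦ u q.1 * v q.2) (t, s) =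
          (Ici s).indicator (fun t ↦ u t * v s) t := rfl
        have hset : Ioc a b ∩ Ici s = Icc s b := by grind
        simp only [this]
        rw [setIntegral_indicator measurableSet_Ici, hset, integral_Icc_eq_integral_Ioc,
          integral_mul_const, intervalIntegral.integral_of_le hs.2]

variable {F : ℂ → ℂ} {Fd : ℝ → ℂ} {z : ℂ}

lemma continuous_of_isACDeriv (hF : IsACDeriv F Fd) :
    Continuous fun t : ℝ ↦ F (cexp (t * I)) := by
  simp only [hF.2.2]
  exact continuous_const.add (intervalIntegral.continuous_primitive hF.1 0)

lemma integral_eq_zero_of_isACDeriv (hF : IsACDeriv F Fd) :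
    ∫ s in (0 : ℝ)..(2 * π), Fd s = 0 := by
  simpa [Complex.exp_two_pi_mul_I] using (hF.2.2 (2 * π)).symm

lemma isACDeriv_conj (hF : IsACDeriv F Fd) :
    IsACDeriv (fun z ↦ conj (F z)) (fun t ↦ conj (Fd t)) := by
  refine ⟨fun a b ↦ intervalIntegrable_conj (hF.1 a b), fun t ↦ by simp only [hF.2.1 t], fun t ↦ ?_⟩
  simp only [hF.2.2 t, map_add, intervalIntegral.intervalIntegral_conj]

lemma integral_mul_eq_neg_integral_mul_of_isACDeriv (hF : IsACDeriv F Fd) {κ κ' : ℝ → ℂ}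
    (hκ : ∀ t, HasDerivAt κ (κ' t) t) (hκ' : Continuous κ') (hper : κ (2 * π) = κ 0) :
    ∫ t in (0 : ℝ)..(2 * π), κ' t * F (cexp (t * I)) = -∫ t in (0 : ℝ)..(2 * π), κ t * Fd t := by
  have hκc : Continuous κ := continuous_iff_continuousAt.2 fun t ↦ (hκ t).continuousAt
  have hFTC (s t : ℝ) : ∫ x in s..t, κ' x = κ t - κ s :=
    intervalIntegral.integral_eq_sub_of_hasDerivAt (fun x _ ↦ hκ x) (hκ'.intervalIntegrable _ _)
  have hprim := intervalIntegral.continuous_primitive hF.1 0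
  simp only [hF.2.2, mul_add]
  have hconst : IntervalIntegrable (fun t ↦ κ' t * F 1) volume 0 (2 * π) :=
    (hκ'.mul continuous_const).intervalIntegrable _ _
  have hvar : IntervalIntegrable (fun t ↦ κ' t * ∫ s in (0 : ℝ)..t, Fd s) volume 0 (2 * π) :=
    (hκ'.mul hprim).intervalIntegrable _ _
  rw [intervalIntegral.integral_add hconst hvar, intervalIntegral.integral_mul_const, hFTC, hper,
    sub_self, zero_mul, zero_add,
    integral_mul_integral_swap Real.two_pi_pos.le (hκ'.intervalIntegrable _ _) (hF.1 _ _)]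
  simp only [hFTC, sub_mul]
  rw [intervalIntegral.integral_sub ((hF.1 _ _).const_mul _)
      ((hF.1 _ _).continuousOn_mul hκc.continuousOn),
    intervalIntegral.integral_const_mul, integral_eq_zero_of_isACDeriv hF, mul_zero, zero_sub]

lemma hasDerivAt_schwarzInt_of_isACDeriv (hF : IsACDeriv F Fd) (hz : ‖z‖ < 1) :
    ∃ S', HasDerivAt (schwarzInt fun t : ℝ ↦ F (cexp (t * I))) S' z ∧
      z * S' = -I * schwarzInt Fd z := by
  refine ⟨_, hasDerivAt_schwarzInt ((continuous_of_isACDeriv hF).intervalIntegrable _ _) hz, ?_⟩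
  have hcont : Continuous fun t ↦ -I * z * (2 * circleMap 0 1 t / (circleMap 0 1 t - z) ^ 2) :=
    continuous_const.mul (.div (by fun_prop) (by fun_prop) fun t ↦
      pow_ne_zero _ (circleMap_sub_ne_zero hz t))
  have hparts := integral_mul_eq_neg_integral_mul_of_isACDeriv hF (hasDerivAt_herglotzKer hz) hcont
    (by simp [herglotzKer, circleMap, Complex.exp_two_pi_mul_I])
  simp only [mul_assoc (-I * z)] at hparts
  rw [intervalIntegral.integral_const_mul] at hparts
  rw [schwarzInt]
  set J := ∫ t in (0 : ℝ)..(2 * π),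
    2 * circleMap 0 1 t / (circleMap 0 1 t - z) ^ 2 * F (cexp (t * I))
  linear_combination (1 / (2 * π)) * I * hparts + (1 / (2 * π)) * z * J * I_sq

lemma rFr_poissonInt (hF : IsACDeriv F Fd) (hz : ‖z‖ < 1) :
    rFr (poissonInt F) z = conjPoissonIntR Fd z := by
  have hFi : IntervalIntegrable (fun t : ℝ ↦ F (cexp (t * I))) volume 0 (2 * π) :=
    (continuous_of_isACDeriv hF).intervalIntegrable _ _
  obtain ⟨A', hA, hzA⟩ := hasDerivAt_schwarzInt_of_isACDeriv hF hz
  obtain ⟨B', hB, hzB⟩ := hasDerivAt_schwarzInt_of_isACDeriv (isACDeriv_conj hF) hz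
  have hf : poissonInt F =ᶠ[𝓝 z] _ := eventually_of_mem
    (isOpen_ball.mem_nhds (show z ∈ ball 0 1 by simpa using hz)) fun w hw ↦
      poissonInt_eq_add_conj hFi (by simpa using hw)
  rw [rFr_of_eq_add_conj (hA.const_mul _) (hB.const_mul _) hf,
    conjPoissonIntR_eq_add_conj (hF.1 _ _) hz, mul_left_comm, hzA, mul_left_comm z, hzB]
  ring_nf

lemma harmonicOnD_conjPoissonIntR {φ : ℝ → ℂ} (hφ : IntervalIntegrable φ volume 0 (2 * π)) :
    HarmonicOnD (conjPoissonIntR φ) :=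
  harmonicOnD_of_eq_add_conj ((differentiableOn_schwarzInt hφ).const_mul _)
    ((differentiableOn_schwarzInt (intervalIntegrable_conj hφ)).const_mul _)
    fun _ hz ↦ conjPoissonIntR_eq_add_conj hφ (by simpa using hz)

end RadialDerivative

section AverageDecay

variable {f : ℝ → ℝ} {θ : ℝ}

lemma setIntegral_closedBall_eq_mul_average {x : ℝ} (hx : 0 < x) :
    ∫ t in closedBall θ x, f t = 2 * x * ⨍ t in closedBall θ x, f t := by
  rw [setAverage_eq, Measure.real, Real.volume_closedBall, ENNReal.toReal_ofReal (by positivity),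
    smul_eq_mul, mul_inv_cancel_left₀ (by positivity)]

lemma exists_forall_average_closedBall_le (hf : Integrable f) (hf0 : 0 ≤ f)
    (hθ : Tendsto (fun x ↦ ⨍ t in closedBall θ x, f t) (𝓝[>] 0) (𝓝 0)) :
    ∃ M, ∀ x, 0 < x → ⨍ t in closedBall θ x, f t ≤ M := by
  obtain ⟨x₀, hx₀, hlt⟩ :=
    mem_nhdsGT_iff_exists_Ioo_subset.1 (hθ.eventually (gt_mem_nhds zero_lt_one))
  replace hx₀ : 0 < x₀ := hx₀
  refine ⟨max 1 ((∫ t, f t) / (2 * x₀)), fun x hx ↦ ?_⟩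
  rcases lt_or_ge x x₀ with h | h
  · exact le_max_of_le_left (le_of_lt (hlt ⟨hx, h⟩))
  · have hle : ∫ t in closedBall θ x, f t ≤ ∫ t, f t := setIntegral_le_integral hf (.of_forall hf0)
    have hnn : 0 ≤ ⨍ t in closedBall θ x, f t := integral_nonneg hf0
    rw [setIntegral_closedBall_eq_mul_average hx] at hle
    refine le_max_of_le_right ((le_div_iff₀ (by positivity)).2 ?_)
    nlinarith

lemma tendsto_tsum_half_pow_mul_dilation {a : ℝ → ℝ} {M : ℝ} (hM : ∀ x, 0 < x → ‖a x‖ ≤ M)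
    (ha : Tendsto a (𝓝[>] 0) (𝓝 0)) :
    Tendsto (fun δ : ℝ ↦ ∑' k : ℕ, (1 / 2 : ℝ) ^ k * a (2 ^ k * δ)) (𝓝[>] 0) (𝓝 0) := by
  have hdil (k : ℕ) : Tendsto (fun δ : ℝ ↦ 2 ^ k * δ) (𝓝[>] 0) (𝓝[>] 0) := by
    have h : Tendsto (fun δ : ℝ ↦ 2 ^ k * δ) (𝓝 0) (𝓝 0) := by
      simpa using (continuous_const_mul ((2 : ℝ) ^ k)).tendsto 0
    exact tendsto_nhdsWithin_iff.2 ⟨h.mono_left nhdsWithin_le_nhds,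
      eventually_mem_nhdsWithin.mono fun δ (hδ : 0 < δ) ↦ by simpa using hδ⟩
  have hterm (k : ℕ) : Tendsto (fun δ : ℝ ↦ (1 / 2 : ℝ) ^ k * a (2 ^ k * δ)) (𝓝[>] 0) (𝓝 0) := by
    simpa using (ha.comp (hdil k)).const_mul ((1 / 2 : ℝ) ^ k)
  have hbound : ∀ᶠ δ : ℝ in 𝓝[>] 0, ∀ k : ℕ,
      ‖(1 / 2 : ℝ) ^ k * a (2 ^ k * δ)‖ ≤ (1 / 2 : ℝ) ^ k * M :=
    eventually_mem_nhdsWithin.mono fun δ (hδ : 0 < δ) k ↦ by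
      rw [norm_mul, norm_pow, Real.norm_of_nonneg one_half_pos.le]
      gcongr
      exact hM _ (by positivity)
  simpa using
    tendsto_tsum_of_dominated_convergence (summable_geometric_two.mul_right M) hterm hbound

lemma exists_nat_dyadic_bound {δ : ℝ} (hδ : 0 < δ) (x : ℝ) :
    ∃ k : ℕ, |x| ≤ 2 ^ k * δ ∧ δ / (δ ^ 2 + x ^ 2) ≤ 4 / (4 ^ k * δ) := by
  rcases le_or_gt |x| δ with h | h
  · refine ⟨0, by simpa using h, ?_⟩
    rw [pow_zero, one_mul, div_le_div_iff₀ (by positivity) hδ]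
    nlinarith [sq_nonneg x]
  · obtain ⟨n, hn1, hn2⟩ := exists_nat_pow_near ((one_le_div hδ).2 h.le) one_lt_two
    rw [le_div_iff₀ hδ] at hn1
    rw [div_lt_iff₀ hδ] at hn2
    refine ⟨n + 1, hn2.le, ?_⟩
    have hx : 4 ^ n * δ ^ 2 ≤ x ^ 2 := by
      rw [← sq_abs x]
      calc (4 : ℝ) ^ n * δ ^ 2 = (2 ^ n * δ) ^ 2 := by
            rw [mul_pow, ← pow_mul, mul_comm n 2, pow_mul]; norm_num
        _ ≤ |x| ^ 2 := by gcongr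
    rw [div_le_div_iff₀ (by positivity) (by positivity), pow_succ]
    nlinarith [sq_nonneg δ]

lemma ofReal_div_sq_add_sq_mul_le_tsum_indicator (f : ℝ → ℝ) (θ : ℝ) {δ : ℝ} (hδ : 0 < δ) (t : ℝ) :
    ENNReal.ofReal (δ / (δ ^ 2 + (θ - t) ^ 2) * f t) ≤
      ∑' k : ℕ, ENNReal.ofReal (4 / (4 ^ k * δ)) *
        (closedBall θ (2 ^ k * δ)).indicator (fun t ↦ ENNReal.ofReal (f t)) t := by
  obtain ⟨k, hk, hker⟩ := exists_nat_dyadic_bound hδ (θ - t)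
  have hmem : t ∈ closedBall θ (2 ^ k * δ) := by rwa [mem_closedBall, dist_comm, Real.dist_eq]
  refine le_trans ?_ (ENNReal.le_tsum k)
  rw [indicator_of_mem hmem, ENNReal.ofReal_mul (by positivity)]
  gcongr

lemma ofReal_mul_lintegral_indicator_closedBall (hf : Integrable f) (hf0 : 0 ≤ f) {δ : ℝ}
    (hδ : 0 < δ) (k : ℕ) :
    ENNReal.ofReal (4 / (4 ^ k * δ)) *
      ∫⁻ t, (closedBall θ (2 ^ k * δ)).indicator (fun t ↦ ENNReal.ofReal (f t)) t =
      ENNReal.ofReal (8 * ((1 / 2 : ℝ) ^ k * ⨍ t in closedBall θ (2 ^ k * δ), f t)) := by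
  rw [lintegral_indicator measurableSet_closedBall,
    ← ofReal_integral_eq_lintegral_ofReal hf.integrableOn (.of_forall hf0),
    ← ENNReal.ofReal_mul (by positivity), setIntegral_closedBall_eq_mul_average (by positivity)]
  congr 1
  have h4 : (4 : ℝ) ^ k = 2 ^ k * 2 ^ k := by rw [← mul_pow]; norm_num
  rw [h4, one_div, inv_pow]
  field_simp
  ring

lemma integral_div_sq_add_sq_mul_le_tsum (hf : Integrable f) (hf0 : 0 ≤ f) {M : ℝ}
    (hM : ∀ x, 0 < x → ⨍ t in closedBall θ x, f t ≤ M) {δ : ℝ} (hδ : 0 < δ) :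
    ∫ t, δ / (δ ^ 2 + (θ - t) ^ 2) * f t ≤
      ∑' k : ℕ, 8 * ((1 / 2 : ℝ) ^ k * ⨍ t in closedBall θ (2 ^ k * δ), f t) := by
  have hnn (k : ℕ) : 0 ≤ 8 * ((1 / 2 : ℝ) ^ k * ⨍ t in closedBall θ (2 ^ k * δ), f t) :=
    mul_nonneg (by positivity) (mul_nonneg (by positivity) (integral_nonneg hf0))
  have hsum : Summable fun k : ℕ ↦
      8 * ((1 / 2 : ℝ) ^ k * ⨍ t in closedBall θ (2 ^ k * δ), f t) :=
    .of_nonneg_of_le hnn (fun k ↦ by gcongr; exact hM _ (by positivity))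
      ((summable_geometric_two.mul_right M).mul_left 8)
  have hfm (k : ℕ) : AEMeasurable
      ((closedBall θ (2 ^ k * δ)).indicator fun t ↦ ENNReal.ofReal (f t)) :=
    hf.aemeasurable.ennreal_ofReal.indicator measurableSet_closedBall
  have hmain := calc
    ∫⁻ t, ENNReal.ofReal (δ / (δ ^ 2 + (θ - t) ^ 2) * f t)
      ≤ ∫⁻ t, ∑' k : ℕ, ENNReal.ofReal (4 / (4 ^ k * δ)) *
          (closedBall θ (2 ^ k * δ)).indicator (fun t ↦ ENNReal.ofReal (f t)) t :=
        lintegral_mono (ofReal_div_sq_add_sq_mul_le_tsum_indicator f θ hδ)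
    _ = ∑' k : ℕ, ENNReal.ofReal
          (8 * ((1 / 2 : ℝ) ^ k * ⨍ t in closedBall θ (2 ^ k * δ), f t)) := by
        rw [lintegral_tsum fun k ↦ (hfm k).const_mul _]
        simp only [lintegral_const_mul'' _ (hfm _),
          ofReal_mul_lintegral_indicator_closedBall hf hf0 hδ]
    _ = ENNReal.ofReal
          (∑' k : ℕ, 8 * ((1 / 2 : ℝ) ^ k * ⨍ t in closedBall θ (2 ^ k * δ), f t)) :=
        (ENNReal.ofReal_tsum_of_nonneg hnn hsum).symm
  refine (integral_eq_lintegral_of_nonneg_ae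
    (.of_forall fun t ↦ mul_nonneg (by positivity) (hf0 t)) ?_).trans_le
      (ENNReal.toReal_le_of_le_ofReal (tsum_nonneg hnn) hmain)
  exact (Measurable.aestronglyMeasurable (by fun_prop)).mul hf.aestronglyMeasurable

lemma tendsto_integral_div_sq_add_sq_mul (hf : Integrable f) (hf0 : 0 ≤ f)
    (hθ : Tendsto (fun x ↦ ⨍ t in closedBall θ x, f t) (𝓝[>] 0) (𝓝 0)) :
    Tendsto (fun δ ↦ ∫ t, δ / (δ ^ 2 + (θ - t) ^ 2) * f t) (𝓝[>] 0) (𝓝 0) := by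
  obtain ⟨M, hM⟩ := exists_forall_average_closedBall_le hf hf0 hθ
  have hnorm (x : ℝ) (hx : 0 < x) : ‖⨍ t in closedBall θ x, f t‖ ≤ M := by
    have hnn : 0 ≤ ⨍ t in closedBall θ x, f t := integral_nonneg hf0
    rw [Real.norm_of_nonneg hnn]
    exact hM x hx
  have hseries := (tendsto_tsum_half_pow_mul_dilation hnorm hθ).const_mul 8
  rw [mul_zero] at hseries
  refine squeeze_zero' ?_ ?_ hseries <;>
    refine eventually_mem_nhdsWithin.mono fun δ (hδ : 0 < δ) ↦ ?_
  · exact integral_nonneg fun t ↦ mul_nonneg (by positivity) (hf0 t)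
  · rw [← tsum_mul_left]
    exact integral_div_sq_add_sq_mul_le_tsum hf hf0 hM hδ

end AverageDecay

section AngularKernel

/-- The conjugate Poisson kernel at `r e^{ix}`, as an explicit function of `r` and `x`. -/
def angularConjKer (r x : ℝ) : ℝ := 2 * r * Real.sin x / ((1 - r) ^ 2 + 2 * r * (1 - Real.cos x))

/-- The conjugate Poisson kernel minus the kernel `cot (x / 2)` of the Hilbert transform truncated
at distance `δ = 1 - r`. It is dominated by a multiple of `δ / (δ ^ 2 + x ^ 2)`. -/
def truncatedCotDiff (r x : ℝ) : ℝ :=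
  angularConjKer r x - if |x| < 1 - r then 0 else (Real.tan (x / 2))⁻¹

variable {r x : ℝ}

lemma conjPoissonKer_ofReal_mul_exp (r x : ℝ) :
    conjPoissonKer ((r : ℂ) * cexp (x * I)) = angularConjKer r x := by
  have hre : ((r : ℂ) * cexp (x * I)).re = r * Real.cos x := by
    rw [re_ofReal_mul, exp_ofReal_mul_I_re]
  have him : ((r : ℂ) * cexp (x * I)).im = r * Real.sin x := by
    rw [im_ofReal_mul, exp_ofReal_mul_I_im]
  have hden : normSq (1 - (r : ℂ) * cexp (x * I)) = (1 - r) ^ 2 + 2 * r * (1 - Real.cos x) := by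
    rw [normSq_apply, sub_re, sub_im, hre, him, one_re, one_im]
    linear_combination r ^ 2 * Real.sin_sq_add_cos_sq x
  rw [conjPoissonKer, angularConjKer, div_im, hden, add_re, sub_re, add_im, sub_im, hre, him,
    one_re, one_im]
  ring

lemma angularConjKer_neg (r x : ℝ) : angularConjKer r (-x) = -angularConjKer r x := by
  simp only [angularConjKer, Real.sin_neg, Real.cos_neg]
  ring

lemma truncatedCotDiff_neg (r x : ℝ) : truncatedCotDiff r (-x) = -truncatedCotDiff r x := by
  rw [truncatedCotDiff, truncatedCotDiff, angularConjKer_neg, abs_neg, neg_div, Real.tan_neg]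
  split_ifs
  · ring
  · rw [inv_neg]; ring

lemma angularConjKer_den_pos (h0 : 0 ≤ r) (h1 : r < 1) (x : ℝ) :
    0 < (1 - r) ^ 2 + 2 * r * (1 - Real.cos x) :=
  add_pos_of_pos_of_nonneg (pow_pos (sub_pos.2 h1) 2)
    (mul_nonneg (by positivity) (sub_nonneg.2 (Real.cos_le_one x)))

lemma continuous_angularConjKer (h0 : 0 ≤ r) (h1 : r < 1) : Continuous (angularConjKer r) :=
  .div (by fun_prop) (by fun_prop) fun x ↦ (angularConjKer_den_pos h0 h1 x).ne'

lemma measurable_truncatedCotDiff (r : ℝ) : Measurable (truncatedCotDiff r) := by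
  unfold truncatedCotDiff angularConjKer
  simp only [Real.tan_eq_sin_div_cos]
  exact .sub (by fun_prop) (.ite (measurableSet_lt (by fun_prop) measurable_const)
    measurable_const (by fun_prop))

lemma abs_angularConjKer_le (h0 : 0 ≤ r) (h1 : r < 1) (hx : |x| < 1 - r) :
    |angularConjKer r x| ≤ 2 / (1 - r) := by
  have hd := angularConjKer_den_pos h0 h1 x
  have hδ : 0 < 1 - r := sub_pos.2 h1
  have hsin : |Real.sin x| ≤ 1 - r := Real.abs_sin_le_abs.trans hx.le
  rw [angularConjKer, abs_div, abs_of_pos hd, div_le_div_iff₀ hd hδ, abs_mul,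
    abs_of_nonneg (by positivity)]
  calc 2 * r * |Real.sin x| * (1 - r) ≤ 2 * 1 * (1 - r) * (1 - r) := by gcongr
    _ ≤ 2 * ((1 - r) ^ 2 + 2 * r * (1 - Real.cos x)) := by
      nlinarith [mul_nonneg h0 (sub_nonneg.2 (Real.cos_le_one x))]

lemma abs_inv_tan_half_le (hx0 : x ≠ 0) (hx : |x| < π) : |(Real.tan (x / 2))⁻¹| ≤ 2 / |x| := by
  have hpos : 0 < |x| := abs_pos.2 hx0
  have htan : |Real.tan (x / 2)| = Real.tan (|x| / 2) := by
    have hnn : 0 ≤ Real.tan (|x| / 2) :=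
      Real.tan_nonneg_of_nonneg_of_le_pi_div_two (by positivity) (by linarith)
    rcases abs_choice x with h | h
    · rw [h] at hnn ⊢; exact abs_of_nonneg hnn
    · rw [h, neg_div, Real.tan_neg] at hnn ⊢; exact abs_of_nonpos (neg_nonneg.1 hnn)
  rw [abs_inv, htan, ← inv_div |x| 2]
  exact inv_anti₀ (half_pos hpos) (Real.lt_tan (half_pos hpos) (by linarith)).le

lemma inv_tan_half_eq_div (hx : Real.cos x ≠ 1) :
    (Real.tan (x / 2))⁻¹ = Real.sin x / (1 - Real.cos x) := by
  have hs : Real.sin x = 2 * Real.sin (x / 2) * Real.cos (x / 2) := by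
    rw [← Real.sin_two_mul, mul_div_cancel₀ x two_ne_zero]
  have hc : 1 - Real.cos x = 2 * Real.sin (x / 2) ^ 2 := by
    rw [Real.sin_sq_eq_half_sub, mul_div_cancel₀ x two_ne_zero]
    ring
  have hsin : Real.sin (x / 2) ≠ 0 := fun h ↦ hx (by simp [h] at hc; linarith)
  rw [hs, hc, Real.tan_eq_sin_div_cos, inv_div]
  field_simp

lemma sq_div_five_le_one_sub_cos (hx : |x| ≤ π) : x ^ 2 / 5 ≤ 1 - Real.cos x := by
  have hπ : (1 : ℝ) / 5 ≤ 2 / π ^ 2 := by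
    rw [div_le_div_iff₀ (by norm_num) (by positivity)]
    nlinarith [Real.pi_lt_d2, Real.pi_pos]
  nlinarith [Real.cos_le_one_sub_mul_cos_sq hx, sq_nonneg x]

lemma abs_angularConjKer_sub_inv_tan_le (h0 : 1 / 2 ≤ r) (h1 : r < 1) (hx : 1 - r ≤ |x|)
    (hπ : |x| < π) :
    |angularConjKer r x - (Real.tan (x / 2))⁻¹| ≤ 10 * (1 - r) / x ^ 2 := by
  have hδ : 0 < 1 - r := sub_pos.2 h1
  have hx0 : 0 < |x| := hδ.trans_le hx
  have hxne : x ≠ 0 := abs_pos.1 hx0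
  have := angularConjKer_den_pos (by linarith) h1 x
  have hcos := sq_div_five_le_one_sub_cos hπ.le
  have hcos0 : 0 < 1 - Real.cos x := lt_of_lt_of_le (by positivity) hcos
  have hfactor : angularConjKer r x - (Real.tan (x / 2))⁻¹ =
      -(Real.tan (x / 2))⁻¹ * ((1 - r) ^ 2 / ((1 - r) ^ 2 + 2 * r * (1 - Real.cos x))) := by
    rw [inv_tan_half_eq_div (sub_pos.1 hcos0).ne, angularConjKer]
    field_simp
    ring
  have hquot : (1 - r) ^ 2 / ((1 - r) ^ 2 + 2 * r * (1 - Real.cos x)) ≤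
      (1 - r) ^ 2 / (x ^ 2 / 5) := by
    gcongr
    nlinarith
  have hquot0 : 0 ≤ (1 - r) ^ 2 / ((1 - r) ^ 2 + 2 * r * (1 - Real.cos x)) := by positivity
  rw [hfactor, abs_mul, abs_neg, abs_of_nonneg hquot0]
  calc _ ≤ 2 / |x| * ((1 - r) ^ 2 / (x ^ 2 / 5)) := by
        gcongr
        exact abs_inv_tan_half_le hxne hπ
    _ = 10 * (1 - r) / x ^ 2 * ((1 - r) / |x|) := by field_simp; ring
    _ ≤ 10 * (1 - r) / x ^ 2 * 1 := by
        gcongr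
        rwa [div_le_one hx0]
    _ = 10 * (1 - r) / x ^ 2 := mul_one _

lemma abs_truncatedCotDiff_le (h0 : 1 / 2 ≤ r) (h1 : r < 1) (hπ : |x| < π) :
    |truncatedCotDiff r x| ≤ 20 * ((1 - r) / ((1 - r) ^ 2 + x ^ 2)) := by
  have hδ : 0 < 1 - r := sub_pos.2 h1
  rw [truncatedCotDiff, ← mul_div_assoc]
  split_ifs with hx
  · rw [sub_zero]
    refine (abs_angularConjKer_le (by linarith) h1 hx).trans ?_
    rw [div_le_div_iff₀ hδ (by positivity)]
    nlinarith [sq_lt_sq' (by linarith [abs_nonneg x]) hx, sq_abs x]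
  · have hx : 1 - r ≤ |x| := not_lt.1 hx
    have hx2 : (1 - r) ^ 2 ≤ x ^ 2 := by rw [← sq_abs x]; gcongr
    refine (abs_angularConjKer_sub_inv_tan_le h0 h1 hx hπ).trans ?_
    rw [div_le_div_iff₀ (lt_of_lt_of_le (by positivity) hx2) (by positivity)]
    nlinarith

end AngularKernel

section RadialLimit

variable {φ : ℝ → ℂ} {r θ : ℝ}

lemma abs_sub_lt_pi_of_mem {t : ℝ} (ht : t ∈ Ioo (θ - π) (θ + π)) : |θ - t| < π := by
  rwa [abs_sub_comm, abs_sub_lt_iff, sub_lt_iff_lt_add', sub_lt_comm, and_comm]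

lemma integral_truncatedCotDiff (r θ : ℝ) :
    ∫ t in Ioo (θ - π) (θ + π), truncatedCotDiff r (θ - t) = 0 := by
  have hodd : ∫ x in (-π)..π, truncatedCotDiff r x = -∫ x in (-π)..π, truncatedCotDiff r x := by
    conv_lhs => rw [← neg_neg π, ← intervalIntegral.integral_comp_neg]
    simp only [truncatedCotDiff_neg, intervalIntegral.integral_neg, neg_neg]
  rw [← integral_Ioc_eq_integral_Ioo, ← intervalIntegral.integral_of_le (by linarith [Real.pi_pos]),
    intervalIntegral.integral_comp_sub_left, sub_add_cancel_left, sub_sub_cancel]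
  exact self_eq_neg.1 hodd

lemma conjPoissonIntR_ofReal_mul_exp (hp : Function.Periodic φ (2 * π)) (r θ : ℝ) :
    conjPoissonIntR φ (r * cexp (θ * I)) =
      (1 / (2 * π)) * ∫ t in Ioo (θ - π) (θ + π), (angularConjKer r (θ - t) : ℂ) * φ t := by
  have hker (t : ℝ) : conjPoissonKer (r * cexp (θ * I) * cexp (-(t : ℂ) * I)) =
      angularConjKer r (θ - t) := by
    rw [← conjPoissonKer_ofReal_mul_exp, mul_assoc, ← Complex.exp_add, ofReal_sub]
    ring_nf
  have hper : Function.Periodic (fun t ↦ (angularConjKer r (θ - t) : ℂ) * φ t) (2 * π) := fun t ↦ by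
    simp only [hp t, angularConjKer, ← sub_sub, Real.sin_sub_two_pi, Real.cos_sub_two_pi]
  have hshift := hper.intervalIntegral_add_eq 0 (θ - π)
  rw [zero_add, show θ - π + 2 * π = θ + π by ring] at hshift
  simp only [conjPoissonIntR, hker]
  rw [hshift, intervalIntegral.integral_of_le (by linarith [Real.pi_pos]),
    integral_Ioc_eq_integral_Ioo]

lemma integrableOn_truncatedCotDiff_mul {g : ℝ → ℂ} (hg : IntegrableOn g (Ioo (θ - π) (θ + π)))
    (h0 : 1 / 2 ≤ r) (h1 : r < 1) :
    IntegrableOn (fun t ↦ (truncatedCotDiff r (θ - t) : ℂ) * g t) (Ioo (θ - π) (θ + π)) := by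
  have hδ : 0 < 1 - r := sub_pos.2 h1
  have hmeas : Measurable fun t ↦ (truncatedCotDiff r (θ - t) : ℂ) :=
    measurable_ofReal.comp ((measurable_truncatedCotDiff r).comp (by fun_prop))
  refine hg.bdd_mul (c := 20 / (1 - r)) hmeas.aestronglyMeasurable
    ((ae_restrict_iff' measurableSet_Ioo).2 (.of_forall fun t ht ↦ ?_))
  rw [norm_real, Real.norm_eq_abs]
  refine (abs_truncatedCotDiff_le h0 h1 (abs_sub_lt_pi_of_mem ht)).trans ?_
  rw [mul_div_assoc', div_le_div_iff₀ (by positivity) hδ]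
  nlinarith [sq_nonneg (θ - t)]

lemma norm_integral_truncatedCotDiff_mul_le {g : ℝ → ℂ}
    (hg : IntegrableOn g (Ioo (θ - π) (θ + π))) (h0 : 1 / 2 ≤ r) (h1 : r < 1) :
    ‖∫ t in Ioo (θ - π) (θ + π), (truncatedCotDiff r (θ - t) : ℂ) * g t‖ ≤
      20 * ∫ t, (1 - r) / ((1 - r) ^ 2 + (θ - t) ^ 2) *
        (Ioo (θ - π) (θ + π)).indicator (fun t ↦ ‖g t‖) t := by
  have hδ : 0 < 1 - r := sub_pos.2 h1
  have hf : Integrable ((Ioo (θ - π) (θ + π)).indicator fun t ↦ ‖g t‖) :=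
    (integrable_indicator_iff measurableSet_Ioo).2 hg.norm
  have hint : Integrable fun t ↦ 20 * ((1 - r) / ((1 - r) ^ 2 + (θ - t) ^ 2) *
      (Ioo (θ - π) (θ + π)).indicator (fun t ↦ ‖g t‖) t) := by
    refine (hf.bdd_mul (c := 1 / (1 - r)) (Measurable.aestronglyMeasurable (by fun_prop))
      (.of_forall fun t ↦ ?_)).const_mul 20
    rw [Real.norm_of_nonneg (by positivity), div_le_div_iff₀ (by positivity) hδ]
    nlinarith [sq_nonneg (θ - t)]
  rw [← integral_const_mul]
  refine (norm_integral_le_of_norm_le hint.integrableOn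
    ((ae_restrict_iff' measurableSet_Ioo).2 (.of_forall fun t ht ↦ ?_))).trans
    (setIntegral_le_integral hint (.of_forall fun t ↦ ?_))
  · rw [indicator_of_mem ht, norm_mul, norm_real, Real.norm_eq_abs, ← mul_assoc]
    gcongr
    exact abs_truncatedCotDiff_le h0 h1 (abs_sub_lt_pi_of_mem ht)
  · have hnn := indicator_nonneg (s := Ioo (θ - π) (θ + π)) (fun t _ ↦ norm_nonneg (g t)) t
    exact mul_nonneg (by norm_num) (mul_nonneg (by positivity) hnn)

lemma integral_truncated_hilbert (hφ : IntegrableOn φ (Ioo (θ - π) (θ + π))) (h0 : 1 / 2 ≤ r)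
    (h1 : r < 1) :
    ∫ t in Ioo (θ - π) (θ + π) \ Ioo (θ - (1 - r)) (θ + (1 - r)),
      φ t / (Real.tan ((θ - t) / 2) : ℂ) =
    (∫ t in Ioo (θ - π) (θ + π), (angularConjKer r (θ - t) : ℂ) * φ t) -
      ∫ t in Ioo (θ - π) (θ + π), (truncatedCotDiff r (θ - t) : ℂ) * φ t := by
  have hang : IntegrableOn (fun t ↦ (angularConjKer r (θ - t) : ℂ) * φ t)
      (Ioo (θ - π) (θ + π)) := by
    have hcont := continuous_angularConjKer (show 0 ≤ r by linarith) h1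
    have hπ : θ - π ≤ θ + π := by linarith [Real.pi_pos]
    rw [← intervalIntegrable_iff_integrableOn_Ioo_of_le hπ] at hφ ⊢
    exact hφ.continuousOn_mul (by fun_prop)
  rw [← integral_sub hang (integrableOn_truncatedCotDiff_mul hφ h0 h1), sdiff_eq,
    ← setIntegral_indicator measurableSet_Ioo.compl]
  refine integral_congr_ae (.of_forall fun t ↦ ?_)
  have hmem : t ∈ Ioo (θ - (1 - r)) (θ + (1 - r)) ↔ |θ - t| < 1 - r := by
    rw [abs_sub_comm, abs_sub_lt_iff, sub_lt_iff_lt_add', sub_lt_comm, and_comm, mem_Ioo]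
  by_cases ht : |θ - t| < 1 - r
  · simp [indicator, hmem, truncatedCotDiff, ht]
  · simp only [indicator, mem_compl_iff, hmem, truncatedCotDiff, ht, not_false_eq_true, if_true,
      if_false, ofReal_sub, ofReal_inv]
    ring

lemma conjPoissonIntR_eq_truncated_hilbert_add (hφ : IntegrableOn φ (Ioo (θ - π) (θ + π)))
    (hp : Function.Periodic φ (2 * π)) (h0 : 1 / 2 ≤ r) (h1 : r < 1) :
    conjPoissonIntR φ (r * cexp (θ * I)) =
      (1 / (2 * π)) * (∫ t in Ioo (θ - π) (θ + π) \ Ioo (θ - (1 - r)) (θ + (1 - r)),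
        φ t / (Real.tan ((θ - t) / 2) : ℂ)) +
      (1 / (2 * π)) * ∫ t in Ioo (θ - π) (θ + π),
        (truncatedCotDiff r (θ - t) : ℂ) * (φ t - φ θ) := by
  have hconst : IntegrableOn (fun _ ↦ φ θ) (Ioo (θ - π) (θ + π)) :=
    integrableOn_const measure_Ioo_lt_top.ne
  have hmean : ∫ t in Ioo (θ - π) (θ + π), (truncatedCotDiff r (θ - t) : ℂ) = 0 := by
    rw [integral_complex_ofReal, integral_truncatedCotDiff, ofReal_zero]
  simp only [mul_sub (truncatedCotDiff r _ : ℂ)]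
  rw [integral_sub (integrableOn_truncatedCotDiff_mul hφ h0 h1)
    (integrableOn_truncatedCotDiff_mul hconst h0 h1), integral_mul_const, hmean,
    integral_truncated_hilbert hφ h0 h1, conjPoissonIntR_ofReal_mul_exp hp]
  ring

lemma tendsto_one_sub_nhdsLT_one : Tendsto (fun r : ℝ ↦ 1 - r) (𝓝[<] 1) (𝓝[>] 0) := by
  have h : Tendsto (fun r : ℝ ↦ 1 - r) (𝓝 1) (𝓝 0) := by
    simpa using (continuous_sub_left (1 : ℝ)).tendsto 1
  exact tendsto_nhdsWithin_iff.2 ⟨h.mono_left nhdsWithin_le_nhds,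
    eventually_mem_nhdsWithin.mono fun r (hr : r < 1) ↦ sub_pos.2 hr⟩

lemma tendsto_integral_truncatedCotDiff_mul_sub (hφ : IntegrableOn φ (Ioo (θ - π) (θ + π)))
    (hθ : Tendsto (fun x ↦ ⨍ t in closedBall θ x, ‖φ t - φ θ‖) (𝓝[>] 0) (𝓝 0)) :
    Tendsto (fun r : ℝ ↦ ∫ t in Ioo (θ - π) (θ + π),
      (truncatedCotDiff r (θ - t) : ℂ) * (φ t - φ θ)) (𝓝[<] 1) (𝓝 0) := by
  have hsub : IntegrableOn (fun t ↦ φ t - φ θ) (Ioo (θ - π) (θ + π)) :=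
    hφ.sub (integrableOn_const measure_Ioo_lt_top.ne)
  set f : ℝ → ℝ := (Ioo (θ - π) (θ + π)).indicator fun t ↦ ‖φ t - φ θ‖
  have hf0 : 0 ≤ f := indicator_nonneg fun t _ ↦ norm_nonneg _
  have hf : Integrable f := (integrable_indicator_iff measurableSet_Ioo).2 hsub.norm
  have hθf : Tendsto (fun x ↦ ⨍ t in closedBall θ x, f t) (𝓝[>] 0) (𝓝 0) := by
    refine hθ.congr' ?_
    filter_upwards [Ioo_mem_nhdsGT Real.pi_pos] with x hx
    refine setAverage_congr_fun measurableSet_closedBall (.of_forall fun t ht ↦ ?_)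
    have hball : t ∈ ball θ π := closedBall_subset_ball hx.2 ht
    rw [Real.ball_eq_Ioo] at hball
    exact (indicator_of_mem hball fun t ↦ ‖φ t - φ θ‖).symm
  have hlim := ((tendsto_integral_div_sq_add_sq_mul hf hf0 hθf).comp
    tendsto_one_sub_nhdsLT_one).const_mul 20
  rw [mul_zero] at hlim
  refine squeeze_zero_norm' ?_ hlim
  filter_upwards [eventually_mem_nhdsWithin,
    mem_nhdsWithin_of_mem_nhds (Ici_mem_nhds one_half_lt_one)] with r h1 h0
  exact norm_integral_truncatedCotDiff_mul_le hsub h0 h1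

theorem ae_tendsto_conjPoissonIntR_of_isPVHilbert
    (hφ : ∀ a b : ℝ, IntervalIntegrable φ volume a b) (hp : Function.Periodic φ (2 * π)) :
    ∀ᵐ θ : ℝ, ∀ L : ℂ, IsPVHilbert φ θ L →
      Tendsto (fun r : ℝ ↦ conjPoissonIntR φ (r * cexp (θ * I))) (𝓝[<] 1) (𝓝 L) := by
  have hloc : LocallyIntegrable φ := fun x ↦ ⟨Icc (x - 1) (x + 1),
    Icc_mem_nhds (by linarith) (by linarith),
    (intervalIntegrable_iff_integrableOn_Icc_of_le (by linarith)).1 (hφ _ _)⟩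
  filter_upwards [IsUnifLocDoublingMeasure.ae_tendsto_average_norm_sub volume hloc 1]
    with θ hLebesgue L hL
  have hφW : IntegrableOn φ (Ioo (θ - π) (θ + π)) :=
    (intervalIntegrable_iff_integrableOn_Ioo_of_le (by linarith [Real.pi_pos])).1 (hφ _ _)
  have havg : Tendsto (fun x ↦ ⨍ t in closedBall θ x, ‖φ t - φ θ‖) (𝓝[>] 0) (𝓝 0) :=
    hLebesgue (fun _ ↦ θ) id tendsto_id
      (eventually_mem_nhdsWithin.mono fun x (hx : 0 < x) ↦ by simpa using hx.le)
  have hlim := (hL.comp tendsto_one_sub_nhdsLT_one).add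
    ((tendsto_integral_truncatedCotDiff_mul_sub hφW havg).const_mul (1 / (2 * π) : ℂ))
  rw [mul_zero, add_zero] at hlim
  refine hlim.congr' ?_
  filter_upwards [eventually_mem_nhdsWithin,
    mem_nhdsWithin_of_mem_nhds (Ici_mem_nhds one_half_lt_one)] with r h1 h0
  exact (conjPoissonIntR_eq_truncated_hilbert_add hφW hp h0 h1).symm

end RadialLimit

section PoissonMeasure

/-- Harmonic measure of the unit disk seen from `z`, in the angular variable: the probability
measure on `(0, 2π]` against which the Poisson integral at `z` integrates. -/
def poissonMeasure (z : ℂ) : Measure ℝ :=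
  (volume.restrict (Ioc 0 (2 * π))).withDensity fun t ↦
    ENNReal.ofReal ((herglotzKer z t).re / (2 * π))

variable {z : ℂ} {r : ℝ}

lemma poissonMeasure_absolutelyContinuous (z : ℂ) :
    poissonMeasure z ≪ volume.restrict (Ioc 0 (2 * π)) :=
  withDensity_absolutelyContinuous _ _

lemma integral_poissonMeasure {E : Type*} [NormedAddCommGroup E] [NormedSpace ℝ E] (hz : ‖z‖ < 1)
    (g : ℝ → E) : ∫ t, g t ∂poissonMeasure z =
      (1 / (2 * π)) • ∫ t in (0 : ℝ)..(2 * π), (herglotzKer z t).re • g t := by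
  have hK := continuous_herglotzKer hz
  rw [poissonMeasure, integral_withDensity_eq_integral_toReal_smul (by fun_prop)
    (.of_forall fun _ ↦ ENNReal.ofReal_lt_top),
    intervalIntegral.integral_of_le Real.two_pi_pos.le, ← integral_smul]
  refine integral_congr_ae (.of_forall fun t ↦ ?_)
  simp only [smul_smul]
  rw [ENNReal.toReal_ofReal (div_nonneg (herglotzKer_re_nonneg hz t) Real.two_pi_pos.le),
    one_div_mul_eq_div]

lemma integrable_poissonMeasure {E : Type*} [NormedAddCommGroup E] [NormedSpace ℝ E] {g : ℝ → E}
    (hg : IntervalIntegrable g volume 0 (2 * π)) (hz : ‖z‖ < 1) :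
    Integrable g (poissonMeasure z) := by
  have hK := continuous_herglotzKer hz
  rw [poissonMeasure, integrable_withDensity_iff_integrable_smul' (by fun_prop)
    (.of_forall fun _ ↦ ENNReal.ofReal_lt_top)]
  simp only [ENNReal.toReal_ofReal (div_nonneg (herglotzKer_re_nonneg hz _) Real.two_pi_pos.le)]
  exact (intervalIntegrable_iff_integrableOn_Ioc_of_le Real.two_pi_pos.le).1
    (hg.continuousOn_smul (by fun_prop))

lemma integral_poissonMeasure_zero (m : ℝ → ℝ) :
    ∫ t, m t ∂poissonMeasure 0 = (1 / (2 * π)) * ∫ t in (0 : ℝ)..(2 * π), m t := by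
  have hK (t : ℝ) : (herglotzKer 0 t).re = 1 := by
    rw [herglotzKer_eq_div_one_sub, zero_mul, add_zero, sub_zero, div_one, one_re]
  rw [integral_poissonMeasure (by simp)]
  simp only [hK, smul_eq_mul, one_mul]

lemma norm_ofReal_mul_exp_lt_one (h0 : 0 ≤ r) (h1 : r < 1) (t : ℝ) :
    ‖(r : ℂ) * cexp (t * I)‖ < 1 := by
  rwa [norm_mul, norm_exp_ofReal_mul_I, mul_one, norm_real, Real.norm_of_nonneg h0]

lemma continuous_comp_circle {X : Type*} [TopologicalSpace X] {u : ℂ → X}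
    (hu : ContinuousOn u (ball 0 1)) (h0 : 0 ≤ r) (h1 : r < 1) :
    Continuous fun t : ℝ ↦ u (r * cexp (t * I)) :=
  hu.comp_continuous (by fun_prop) fun t ↦ by simpa using norm_ofReal_mul_exp_lt_one h0 h1 t

lemma norm_ofReal_mul_lt_one (h0 : 0 ≤ r) (h1 : r < 1) (hz : ‖z‖ < 1) : ‖(r : ℂ) * z‖ < 1 := by
  rw [norm_mul, norm_real, Real.norm_of_nonneg h0]
  nlinarith [norm_nonneg z]

lemma integral_poissonMeasure_of_differentiableOn {G : ℂ → ℂ}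
    (hG : DifferentiableOn ℂ G (ball 0 1)) (h0 : 0 ≤ r) (h1 : r < 1) (hz : ‖z‖ < 1) :
    ∫ t, G (r * cexp (t * I)) ∂poissonMeasure z = G (r * z) := by
  have hd : DifferentiableOn ℂ (fun w : ℂ ↦ G (r * w)) (closure (ball 0 1)) := by
    rw [closure_ball (0 : ℂ) one_ne_zero]
    refine hG.comp (by fun_prop) fun w hw ↦ ?_
    rw [mem_closedBall_zero_iff] at hw
    rw [mem_ball_zero_iff, norm_mul, norm_real, Real.norm_of_nonneg h0]
    nlinarith
  have hmean := hd.diffContOnCl.circleAverage_re_herglotzRieszKernel_smul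
    (w := z) (by simpa using hz)
  rw [← hmean, integral_poissonMeasure hz, Real.circleAverage_def, one_div]
  simp [circleMap, herglotzRieszKernel, herglotzKer]

lemma isProbabilityMeasure_poissonMeasure (hz : ‖z‖ < 1) :
    IsProbabilityMeasure (poissonMeasure z) := by
  have : IsFiniteMeasure (poissonMeasure z) :=
    (integrable_const_iff_isFiniteMeasure (one_ne_zero' ℝ)).1
      (integrable_poissonMeasure intervalIntegrable_const hz)
  have hmean := integral_poissonMeasure_of_differentiableOn (G := fun _ ↦ 1)
    (differentiableOn_const _) le_rfl zero_lt_one hz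
  rw [integral_const, real_smul, mul_one, ofReal_eq_one] at hmean
  exact isProbabilityMeasure_iff_real.2 hmean

variable {m : ℝ → ℝ}

lemma intervalIntegrable_ofReal {a b : ℝ} (hm : IntervalIntegrable m volume a b) :
    IntervalIntegrable (fun t ↦ (m t : ℂ)) volume a b :=
  ⟨hm.1.ofReal, hm.2.ofReal⟩

lemma schwarzInt_ofReal_re (hm : IntervalIntegrable m volume 0 (2 * π)) (hz : ‖z‖ < 1) :
    (schwarzInt (fun t ↦ (m t : ℂ)) z).re = ∫ t, m t ∂poissonMeasure z := by
  have hK := (continuous_herglotzKer hz).continuousOn (s := uIcc 0 (2 * π))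
  have hre := reCLM.intervalIntegral_comp_comm
    ((intervalIntegrable_ofReal hm).continuousOn_mul hK)
  simp only [reCLM_apply, re_mul_ofReal] at hre
  have hc : (1 / (2 * π) : ℂ) = ((1 / (2 * π) : ℝ) : ℂ) := by push_cast; rfl
  rw [integral_poissonMeasure hz, schwarzInt, hc, re_ofReal_mul, ← hre]
  rfl

lemma continuousOn_integral_poissonMeasure (hm : IntervalIntegrable m volume 0 (2 * π)) :
    ContinuousOn (fun z ↦ ∫ t, m t ∂poissonMeasure z) (ball 0 1) :=
  (continuous_re.comp_continuousOn
    (differentiableOn_schwarzInt (intervalIntegrable_ofReal hm)).continuousOn).congr fun _ hw ↦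
    (schwarzInt_ofReal_re hm (by simpa using hw)).symm

lemma integral_integral_poissonMeasure (hm : IntervalIntegrable m volume 0 (2 * π)) (h0 : 0 ≤ r)
    (h1 : r < 1) (hz : ‖z‖ < 1) :
    ∫ t, (∫ s, m s ∂poissonMeasure (r * cexp (t * I))) ∂poissonMeasure z =
      ∫ s, m s ∂poissonMeasure (r * z) := by
  have hd := differentiableOn_schwarzInt (intervalIntegrable_ofReal hm)
  have hint : Integrable (fun t : ℝ ↦ schwarzInt (fun t ↦ (m t : ℂ)) (r * cexp (t * I)))
      (poissonMeasure z) := integrable_poissonMeasure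
    ((continuous_comp_circle hd.continuousOn h0 h1).intervalIntegrable _ _) hz
  have hre := reCLM.integral_comp_comm hint
  rw [integral_poissonMeasure_of_differentiableOn hd h0 h1 hz] at hre
  simpa only [reCLM_apply, schwarzInt_ofReal_re hm (norm_ofReal_mul_lt_one h0 h1 hz),
    schwarzInt_ofReal_re hm (norm_ofReal_mul_exp_lt_one h0 h1 _)] using hre

lemma integral_circle_le_integral_poissonMeasure {u : ℂ → ℝ} (hu : ContinuousOn u (ball 0 1))
    (hm : IntervalIntegrable m volume 0 (2 * π))
    (hum : ∀ w, ‖w‖ < 1 → u w ≤ ∫ t, m t ∂poissonMeasure w) (h0 : 0 ≤ r) (h1 : r < 1)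
    (hz : ‖z‖ < 1) :
    ∫ t, u (r * cexp (t * I)) ∂poissonMeasure z ≤ ∫ t, m t ∂poissonMeasure (r * z) := by
  have hcircle {v : ℂ → ℝ} (hv : ContinuousOn v (ball 0 1)) :
      Integrable (fun t : ℝ ↦ v (r * cexp (t * I))) (poissonMeasure z) :=
    integrable_poissonMeasure ((continuous_comp_circle hv h0 h1).intervalIntegrable _ _) hz
  have hle (t : ℝ) : u (r * cexp (t * I)) ≤ ∫ s, m s ∂poissonMeasure (r * cexp (t * I)) :=
    hum _ (norm_ofReal_mul_exp_lt_one h0 h1 t)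
  rw [← integral_integral_poissonMeasure hm h0 h1 hz]
  exact integral_mono_ae (hcircle hu) (hcircle (continuousOn_integral_poissonMeasure hm))
    (.of_forall hle)

end PoissonMeasure

section HarmonicMajorant

variable {h₁ h₂ G : ℂ → ℂ} {n ψ : ℝ → ℝ} {z : ℂ}

lemma tendsto_ofReal_mul_nhdsLT_one (z : ℂ) : Tendsto (fun r : ℝ ↦ (r : ℂ) * z) (𝓝[<] 1) (𝓝 z) := by
  have hcont : Continuous fun r : ℝ ↦ (r : ℂ) * z := by fun_prop
  simpa using (hcont.tendsto 1).mono_left (nhdsWithin_le_nhds (s := Iio (1 : ℝ)))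

lemma tendsto_integral_circle_poissonMeasure {v : ℂ → ℝ} {K : ℝ} (hv : ContinuousOn v (ball 0 1))
    (hvK : ∀ w, ‖w‖ < 1 → ‖v w‖ ≤ K)
    (hlim : ∀ᵐ θ : ℝ, Tendsto (fun r : ℝ ↦ v (r * cexp (θ * I))) (𝓝[<] 1) (𝓝 (ψ θ)))
    (hz : ‖z‖ < 1) :
    Tendsto (fun r : ℝ ↦ ∫ t, v (r * cexp (t * I)) ∂poissonMeasure z) (𝓝[<] 1)
      (𝓝 (∫ t, ψ t ∂poissonMeasure z)) := by
  have hprob := isProbabilityMeasure_poissonMeasure hz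
  have hr : ∀ᶠ r : ℝ in 𝓝[<] 1, r ∈ Ioo 0 1 := Ioo_mem_nhdsLT zero_lt_one
  exact tendsto_integral_filter_of_dominated_convergence (fun _ ↦ K)
    (hr.mono fun r hr ↦ (continuous_comp_circle hv hr.1.le hr.2).aestronglyMeasurable)
    (hr.mono fun r hr ↦ .of_forall fun t ↦ hvK _ (norm_ofReal_mul_exp_lt_one hr.1.le hr.2 t))
    (integrable_const K) ((poissonMeasure_absolutelyContinuous z).ae_le (ae_restrict_of_ae hlim))

lemma norm_le_integral_circle (hG : DifferentiableOn ℂ G (ball 0 1))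
    (hn : IntervalIntegrable n volume 0 (2 * π)) {v : ℂ → ℝ} (hv : ContinuousOn v (ball 0 1))
    (hGv : ∀ w, ‖w‖ < 1 → ‖G w‖ ≤ (∫ t, n t ∂poissonMeasure w) + v w) {r : ℝ} (h0 : 0 ≤ r)
    (h1 : r < 1) (hz : ‖z‖ < 1) : ‖G (r * z)‖ ≤
      (∫ t, n t ∂poissonMeasure (r * z)) + ∫ t, v (r * cexp (t * I)) ∂poissonMeasure z := by
  have hvcircle := continuous_comp_circle hv h0 h1
  have hGcircle := continuous_comp_circle hG.continuousOn.norm h0 h1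
  have hvint := integrable_poissonMeasure (hvcircle.intervalIntegrable _ _) hz
  have hGint := integrable_poissonMeasure (hGcircle.intervalIntegrable _ _) hz
  have hmean := integral_circle_le_integral_poissonMeasure (u := fun w ↦ ‖G w‖ - v w)
    (hG.continuousOn.norm.sub hv) hn (fun w hw ↦ sub_le_iff_le_add.2 (hGv w hw)) h0 h1 hz
  rw [integral_sub hGint hvint, sub_le_iff_le_add] at hmean
  rw [← integral_poissonMeasure_of_differentiableOn hG h0 h1 hz]
  exact (norm_integral_le_integral_norm _).trans hmean

lemma norm_le_integral_add_integral_of_le (hG : DifferentiableOn ℂ G (ball 0 1))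
    (hn : IntervalIntegrable n volume 0 (2 * π)) {v : ℂ → ℝ} {K : ℝ}
    (hv : ContinuousOn v (ball 0 1)) (hvK : ∀ w, ‖w‖ < 1 → ‖v w‖ ≤ K)
    (hGv : ∀ w, ‖w‖ < 1 → ‖G w‖ ≤ (∫ t, n t ∂poissonMeasure w) + v w)
    (hlim : ∀ᵐ θ : ℝ, Tendsto (fun r : ℝ ↦ v (r * cexp (θ * I))) (𝓝[<] 1) (𝓝 (ψ θ)))
    (hz : ‖z‖ < 1) : ‖G z‖ ≤ (∫ t, n t ∂poissonMeasure z) + ∫ t, ψ t ∂poissonMeasure z := by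
  have hnhds : ball (0 : ℂ) 1 ∈ 𝓝 z := isOpen_ball.mem_nhds (by simpa using hz)
  have hu := continuousOn_integral_poissonMeasure hn
  have hGlim : Tendsto (fun r : ℝ ↦ ‖G (r * z)‖) (𝓝[<] 1) (𝓝 ‖G z‖) :=
    ((hG.continuousOn.continuousAt hnhds).tendsto.comp (tendsto_ofReal_mul_nhdsLT_one z)).norm
  have hulim : Tendsto (fun r : ℝ ↦ ∫ t, n t ∂poissonMeasure (r * z)) (𝓝[<] 1)
      (𝓝 (∫ t, n t ∂poissonMeasure z)) :=
    (hu.continuousAt hnhds).tendsto.comp (tendsto_ofReal_mul_nhdsLT_one z)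
  refine le_of_tendsto_of_tendsto hGlim
    (hulim.add (tendsto_integral_circle_poissonMeasure hv hvK hlim hz)) ?_
  filter_upwards [Ioo_mem_nhdsLT zero_lt_one] with r hr
  exact norm_le_integral_circle hG hn hv hGv hr.1.le hr.2 hz

lemma one_le_norm_one_add_mul {ε : ℝ} (hε : 0 < ε) {w : ℂ} (hw : 0 ≤ w.re) : 1 ≤ ‖1 + ε * w‖ := by
  have h : (1 + ε * w).re = 1 + ε * w.re := by rw [add_re, one_re, re_ofReal_mul]
  exact (h.symm ▸ le_add_of_nonneg_right (by positivity)).trans (re_le_norm _)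

lemma mul_norm_le_norm_one_add_mul {ε : ℝ} (hε : 0 < ε) {w : ℂ} (hw : 0 ≤ w.re) :
    ε * ‖w‖ ≤ ‖1 + ε * w‖ := by
  refine (sq_le_sq₀ (by positivity) (norm_nonneg _)).1 ?_
  rw [mul_pow, Complex.sq_norm, Complex.sq_norm, normSq_apply, normSq_apply, add_re, add_im,
    re_ofReal_mul, im_ofReal_mul, one_re, one_im]
  nlinarith [mul_nonneg hε.le hw]

/- `h₁ - h₂` is not known to be the Poisson integral of its boundary values. Dividing it by
`(1 + ε h₁) (1 + ε h₂)` gives a bounded holomorphic function, to which the mean value property and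
dominated convergence apply, and `ε → 0` recovers `h₁ - h₂`. -/
lemma norm_sub_div_le_min {ε : ℝ} (hε : 0 < ε) {w₁ w₂ : ℂ} (hw₁ : 0 ≤ w₁.re) (hw₂ : 0 ≤ w₂.re) :
    ‖(w₁ - w₂) / ((1 + ε * w₁) * (1 + ε * w₂))‖ ≤ min ‖w₁ - w₂‖ (2 / ε) := by
  have h₁ := one_le_norm_one_add_mul hε hw₁
  have h₂ := one_le_norm_one_add_mul hε hw₂
  rw [norm_div, norm_mul]
  refine le_min (div_le_self (norm_nonneg _) (one_le_mul_of_one_le_of_one_le h₁ h₂)) ?_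
  rw [div_le_div_iff₀ (by positivity) hε]
  calc ‖w₁ - w₂‖ * ε ≤ ε * ‖w₁‖ + ε * ‖w₂‖ := by nlinarith [norm_sub_le w₁ w₂]
    _ ≤ ‖1 + ε * w₁‖ + ‖1 + ε * w₂‖ := add_le_add (mul_norm_le_norm_one_add_mul hε hw₁)
      (mul_norm_le_norm_one_add_mul hε hw₂)
    _ ≤ 2 * (‖1 + ε * w₁‖ * ‖1 + ε * w₂‖) := by nlinarith

lemma norm_sub_div_le_integral_add_integral (hh₁ : DifferentiableOn ℂ h₁ (ball 0 1))
    (hh₂ : DifferentiableOn ℂ h₂ (ball 0 1)) (hre₁ : ∀ w, ‖w‖ < 1 → 0 ≤ (h₁ w).re)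
    (hre₂ : ∀ w, ‖w‖ < 1 → 0 ≤ (h₂ w).re) (hn : IntervalIntegrable n volume 0 (2 * π))
    (hψ : IntervalIntegrable ψ volume 0 (2 * π))
    (hre : ∀ w, ‖w‖ < 1 → |(h₁ w - h₂ w).re| ≤ ∫ t, n t ∂poissonMeasure w)
    (hlim : ∀ᵐ θ : ℝ, Tendsto (fun r : ℝ ↦ (h₁ (r * cexp (θ * I)) - h₂ (r * cexp (θ * I))).im)
      (𝓝[<] 1) (𝓝 (ψ θ))) (hz : ‖z‖ < 1) {ε : ℝ} (hε : 0 < ε) :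
    ‖(h₁ z - h₂ z) / ((1 + ε * h₁ z) * (1 + ε * h₂ z))‖ ≤
      (∫ t, n t ∂poissonMeasure z) + ∫ t, |ψ t| ∂poissonMeasure z := by
  have hne {w w' : ℂ} (hw : 0 ≤ w.re) (hw' : 0 ≤ w'.re) : (1 + ε * w) * (1 + ε * w') ≠ 0 := by
    have h := one_le_norm_one_add_mul hε hw
    have h' := one_le_norm_one_add_mul hε hw'
    exact mul_ne_zero (norm_pos_iff.1 (by linarith)) (norm_pos_iff.1 (by linarith))
  have hdiff : DifferentiableOn ℂ
      (fun w ↦ (h₁ w - h₂ w) / ((1 + ε * h₁ w) * (1 + ε * h₂ w))) (ball 0 1) :=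
    (hh₁.sub hh₂).div (by fun_prop) fun w hw ↦
      hne (hre₁ w (by simpa using hw)) (hre₂ w (by simpa using hw))
  have hint : Integrable (fun t ↦ |ψ t|) (poissonMeasure z) := integrable_poissonMeasure hψ.abs hz
  refine (norm_le_integral_add_integral_of_le (v := fun w ↦ min |(h₁ w - h₂ w).im| (2 / ε))
    (K := 2 / ε) (ψ := fun t ↦ min |ψ t| (2 / ε)) hdiff hn ?_ (fun w _ ↦ ?_) (fun w hw ↦ ?_)
    (hlim.mono fun t ht ↦ ht.abs.min tendsto_const_nhds) hz).trans ?_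
  · exact (continuous_im.comp_continuousOn (hh₁.sub hh₂).continuousOn).abs.inf continuousOn_const
  · rw [Real.norm_of_nonneg (by positivity)]
    exact min_le_right _ _
  · refine (norm_sub_div_le_min hε (hre₁ w hw) (hre₂ w hw)).trans ?_
    have hnorm := norm_le_abs_re_add_abs_im (h₁ w - h₂ w)
    have hre' := hre w hw
    rw [← min_add_add_left]
    exact min_le_min (by linarith) (by linarith [abs_nonneg (h₁ w - h₂ w).re])
  · refine add_le_add_right (integral_mono_of_nonneg (.of_forall fun t ↦ ?_) hint
      (.of_forall fun t ↦ min_le_left _ _)) _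
    exact le_min (abs_nonneg _) (by positivity)

theorem norm_sub_le_integral_add_integral (hh₁ : DifferentiableOn ℂ h₁ (ball 0 1))
    (hh₂ : DifferentiableOn ℂ h₂ (ball 0 1)) (hre₁ : ∀ w, ‖w‖ < 1 → 0 ≤ (h₁ w).re)
    (hre₂ : ∀ w, ‖w‖ < 1 → 0 ≤ (h₂ w).re) (hn : IntervalIntegrable n volume 0 (2 * π))
    (hψ : IntervalIntegrable ψ volume 0 (2 * π))
    (hre : ∀ w, ‖w‖ < 1 → |(h₁ w - h₂ w).re| ≤ ∫ t, n t ∂poissonMeasure w)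
    (hlim : ∀ᵐ θ : ℝ, Tendsto (fun r : ℝ ↦ (h₁ (r * cexp (θ * I)) - h₂ (r * cexp (θ * I))).im)
      (𝓝[<] 1) (𝓝 (ψ θ))) (hz : ‖z‖ < 1) :
    ‖h₁ z - h₂ z‖ ≤ (∫ t, n t ∂poissonMeasure z) + ∫ t, |ψ t| ∂poissonMeasure z := by
  have hcont : ContinuousAt
      (fun ε : ℝ ↦ ‖(h₁ z - h₂ z) / ((1 + ε * h₁ z) * (1 + ε * h₂ z))‖) 0 :=
    (ContinuousAt.div (by fun_prop) (by fun_prop) (by simp)).norm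
  have hlim0 := hcont.tendsto.mono_left (nhdsWithin_le_nhds (s := Ioi 0))
  simp only [ofReal_zero, zero_mul, add_zero, mul_one, div_one] at hlim0
  refine le_of_tendsto hlim0 ?_
  filter_upwards [eventually_mem_nhdsWithin] with ε hε
  exact norm_sub_div_le_integral_add_integral hh₁ hh₂ hre₁ hre₂ hn hψ hre hlim hz hε

end HarmonicMajorant

section ConjugatePoissonBound

variable {φ ψ : ℝ → ℂ} {z : ℂ}

lemma schwarzInt_sub (hφ : IntervalIntegrable φ volume 0 (2 * π))
    (hψ : IntervalIntegrable ψ volume 0 (2 * π)) (hz : ‖z‖ < 1) :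
    schwarzInt (fun t ↦ φ t - ψ t) z = schwarzInt φ z - schwarzInt ψ z := by
  have hK := (continuous_herglotzKer hz).continuousOn (s := uIcc 0 (2 * π))
  simp only [schwarzInt, mul_sub]
  rw [intervalIntegral.integral_sub (hφ.continuousOn_mul hK) (hψ.continuousOn_mul hK), mul_sub]

lemma norm_schwarzInt_ofReal_le {a b : ℝ → ℝ} (ha : IntervalIntegrable a volume 0 (2 * π))
    (hb : IntervalIntegrable b volume 0 (2 * π))
    (hlim : ∀ᵐ θ : ℝ, Tendsto (fun r : ℝ ↦ (schwarzInt (fun t ↦ (a t : ℂ)) (r * cexp (θ * I))).im)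
      (𝓝[<] 1) (𝓝 (b θ))) (hz : ‖z‖ < 1) : ‖schwarzInt (fun t ↦ (a t : ℂ)) z‖ ≤
      (∫ t, |a t| ∂poissonMeasure z) + ∫ t, |b t| ∂poissonMeasure z := by
  have hpos : IntervalIntegrable (fun t ↦ max (a t) 0) volume 0 (2 * π) :=
    ⟨ha.1.pos_part, ha.2.pos_part⟩
  have hneg : IntervalIntegrable (fun t ↦ max (-a t) 0) volume 0 (2 * π) :=
    ⟨ha.1.neg_part, ha.2.neg_part⟩
  have hsub {w : ℂ} (hw : ‖w‖ < 1) : schwarzInt (fun t ↦ (max (a t) 0 : ℝ)) w -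
      schwarzInt (fun t ↦ (max (-a t) 0 : ℝ)) w = schwarzInt (fun t ↦ (a t : ℂ)) w := by
    rw [← schwarzInt_sub (intervalIntegrable_ofReal hpos) (intervalIntegrable_ofReal hneg) hw]
    simp only [← ofReal_sub, max_zero_sub_max_neg_zero_eq_self]
  rw [← hsub hz]
  refine norm_sub_le_integral_add_integral
    (differentiableOn_schwarzInt (intervalIntegrable_ofReal hpos))
    (differentiableOn_schwarzInt (intervalIntegrable_ofReal hneg)) (fun w hw ↦ ?_) (fun w hw ↦ ?_)
    ha.abs hb (fun w hw ↦ ?_) (hlim.mono fun θ hθ ↦ hθ.congr' ?_) hz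
  · rw [schwarzInt_ofReal_re hpos hw]
    exact integral_nonneg fun t ↦ le_max_right _ _
  · rw [schwarzInt_ofReal_re hneg hw]
    exact integral_nonneg fun t ↦ le_max_right _ _
  · rw [hsub hw, schwarzInt_ofReal_re ha hw]
    exact abs_integral_le_integral_abs
  · filter_upwards [Ioo_mem_nhdsLT zero_lt_one] with r hr
    rw [hsub (norm_ofReal_mul_exp_lt_one hr.1.le hr.2 θ)]

lemma schwarzInt_ofReal_re_im (hφ : IntervalIntegrable φ volume 0 (2 * π)) (hz : ‖z‖ < 1) :
    (schwarzInt (fun t ↦ ((φ t).re : ℂ)) z).im = (conjPoissonIntR φ z).re := by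
  have hK := continuous_herglotzKer hz
  have him : Continuous fun t ↦ ((herglotzKer z t).im : ℂ) := by fun_prop
  have hre : IntervalIntegrable (fun t ↦ ((φ t).re : ℂ)) volume 0 (2 * π) :=
    intervalIntegrable_ofReal ⟨hφ.1.re, hφ.2.re⟩
  have hleft := imCLM.intervalIntegral_comp_comm (hre.continuousOn_mul hK.continuousOn)
  have hright := reCLM.intervalIntegral_comp_comm (hφ.continuousOn_mul him.continuousOn)
  simp only [imCLM_apply, im_mul_ofReal] at hleft
  simp only [reCLM_apply, re_ofReal_mul] at hright
  have hc : (1 / (2 * π) : ℂ) = ((1 / (2 * π) : ℝ) : ℂ) := by push_cast; rfl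
  simp only [schwarzInt, conjPoissonIntR, ← herglotzKer_im, hc, im_ofReal_mul, re_ofReal_mul]
  rw [← hleft, ← hright]

lemma conjPoissonIntR_const_mul (c : ℂ) (φ : ℝ → ℂ) (z : ℂ) :
    conjPoissonIntR (fun t ↦ c * φ t) z = c * conjPoissonIntR φ z := by
  simp only [conjPoissonIntR, mul_left_comm _ c, intervalIntegral.integral_const_mul]

theorem norm_conjPoissonIntR_le (hφ : IntervalIntegrable φ volume 0 (2 * π))
    (hψ : IntervalIntegrable ψ volume 0 (2 * π))
    (hlim : ∀ᵐ θ : ℝ, Tendsto (fun r : ℝ ↦ conjPoissonIntR φ (r * cexp (θ * I))) (𝓝[<] 1)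
      (𝓝 (ψ θ))) (hz : ‖z‖ < 1) :
    ‖conjPoissonIntR φ z‖ ≤ ∫ t, (‖φ t‖ + ‖ψ t‖) ∂poissonMeasure z := by
  obtain ⟨c, hc, hcz⟩ := RCLike.exists_norm_eq_mul_self (conjPoissonIntR φ z)
  have hcφ := hφ.const_mul c
  have hcψ := hψ.const_mul c
  have hreφ : IntervalIntegrable (fun t ↦ (c * φ t).re) volume 0 (2 * π) := ⟨hcφ.1.re, hcφ.2.re⟩
  have hreψ : IntervalIntegrable (fun t ↦ (c * ψ t).re) volume 0 (2 * π) := ⟨hcψ.1.re, hcψ.2.re⟩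
  have him {w : ℂ} (hw : ‖w‖ < 1) :
      (schwarzInt (fun t ↦ ((c * φ t).re : ℂ)) w).im = (c * conjPoissonIntR φ w).re := by
    rw [schwarzInt_ofReal_re_im hcφ hw, conjPoissonIntR_const_mul]
  have hbound := norm_schwarzInt_ofReal_le (b := fun t ↦ (c * ψ t).re) hreφ hreψ
    (hlim.mono fun θ hθ ↦ (continuous_re.tendsto _ |>.comp (hθ.const_mul c)).congr' (by
      filter_upwards [Ioo_mem_nhdsLT zero_lt_one] with r hr
      exact (him (norm_ofReal_mul_exp_lt_one hr.1.le hr.2 θ)).symm)) hz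
  have hre (w : ℂ) : |(c * w).re| ≤ ‖w‖ :=
    (abs_re_le_norm _).trans_eq (by rw [norm_mul, hc, one_mul])
  have hint {u : ℝ → ℂ} (hu : IntervalIntegrable u volume 0 (2 * π)) :
      Integrable (fun t ↦ ‖u t‖) (poissonMeasure z) := integrable_poissonMeasure hu.norm hz
  calc ‖conjPoissonIntR φ z‖ = (c * conjPoissonIntR φ z).re := by rw [← hcz]; exact ofReal_re _
    _ = (schwarzInt (fun t ↦ ((c * φ t).re : ℂ)) z).im := (him hz).symm
    _ ≤ ‖schwarzInt (fun t ↦ ((c * φ t).re : ℂ)) z‖ := im_le_norm _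
    _ ≤ (∫ t, |(c * φ t).re| ∂poissonMeasure z) + ∫ t, |(c * ψ t).re| ∂poissonMeasure z := hbound
    _ ≤ (∫ t, ‖φ t‖ ∂poissonMeasure z) + ∫ t, ‖ψ t‖ ∂poissonMeasure z := add_le_add
      (integral_mono (integrable_poissonMeasure hreφ.abs hz) (hint hφ) fun t ↦ hre _)
      (integral_mono (integrable_poissonMeasure hreψ.abs hz) (hint hψ) fun t ↦ hre _)
    _ = ∫ t, (‖φ t‖ + ‖ψ t‖) ∂poissonMeasure z := (integral_add (hint hφ) (hint hψ)).symm

end ConjugatePoissonBound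

section HardySpace

variable {g : ℂ → ℂ} {m : ℝ → ℝ} {ψ : ℝ → ℂ} {p : ℝ≥0∞} {q r : ℝ} {z : ℂ}

lemma rpow_integral_poissonMeasure_le (hq : 1 ≤ q) (hm0 : ∀ t, 0 ≤ m t)
    (hm : IntervalIntegrable m volume 0 (2 * π))
    (hmq : IntervalIntegrable (fun t ↦ m t ^ q) volume 0 (2 * π)) (hz : ‖z‖ < 1) :
    (∫ t, m t ∂poissonMeasure z) ^ q ≤ ∫ t, m t ^ q ∂poissonMeasure z := by
  have hprob := isProbabilityMeasure_poissonMeasure hz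
  exact (convexOn_rpow hq).map_integral_le (Real.continuous_rpow_const (by linarith)).continuousOn
    isClosed_Ici (.of_forall hm0) (integrable_poissonMeasure hm hz)
    (integrable_poissonMeasure hmq hz)

lemma Mp_le_of_norm_le_integral (hq : 1 ≤ q) (hg : ContinuousOn g (ball 0 1)) (hm0 : ∀ t, 0 ≤ m t)
    (hm : IntervalIntegrable m volume 0 (2 * π))
    (hmq : IntervalIntegrable (fun t ↦ m t ^ q) volume 0 (2 * π))
    (hgm : ∀ w, ‖w‖ < 1 → ‖g w‖ ≤ ∫ t, m t ∂poissonMeasure w) (h0 : 0 ≤ r) (h1 : r < 1) :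
    Mp q g r ≤ ((1 / (2 * π)) * ∫ t in (0 : ℝ)..(2 * π), m t ^ q) ^ (1 / q) := by
  have hq0 : 0 ≤ q := zero_le_one.trans hq
  have hgq : ContinuousOn (fun w ↦ ‖g w‖ ^ q) (ball 0 1) :=
    hg.norm.rpow_const fun _ _ ↦ .inr hq0
  have hgmq (w : ℂ) (hw : ‖w‖ < 1) : ‖g w‖ ^ q ≤ ∫ t, m t ^ q ∂poissonMeasure w :=
    (Real.rpow_le_rpow (norm_nonneg _) (hgm w hw) hq0).trans
      (rpow_integral_poissonMeasure_le hq hm0 hm hmq hw)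
  rw [Mp, ← integral_poissonMeasure_zero, ← integral_poissonMeasure_zero]
  refine Real.rpow_le_rpow (integral_nonneg fun t ↦ by positivity) ?_ (by positivity)
  simpa only [mul_zero] using
    integral_circle_le_integral_poissonMeasure hgq hmq hgmq h0 h1 (z := 0) (by simp)

lemma memhp_of_norm_le_integral (hp : 1 ≤ p) (hp' : p ≠ ⊤) (hg : HarmonicOnD g)
    (hm0 : ∀ t, 0 ≤ m t) (hm : MemLp m p (volume.restrict (Ioc 0 (2 * π))))
    (hgm : ∀ w, ‖w‖ < 1 → ‖g w‖ ≤ ∫ t, m t ∂poissonMeasure w) : Memhp p.toReal g := by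
  have hmq := hm.integrable_norm_rpow (zero_lt_one.trans_le hp).ne' hp'
  simp only [Real.norm_of_nonneg (hm0 _)] at hmq
  rw [← IntegrableOn, ← intervalIntegrable_iff_integrableOn_Ioc_of_le Real.two_pi_pos.le] at hmq
  have hm1 : IntervalIntegrable m volume 0 (2 * π) :=
    (intervalIntegrable_iff_integrableOn_Ioc_of_le Real.two_pi_pos.le).2 (hm.integrable hp)
  have hq : 1 ≤ p.toReal := by simpa using ENNReal.toReal_mono hp' hp
  exact ⟨hg, _, fun r hr ↦
    Mp_le_of_norm_le_integral hq hg.1.continuousOn hm0 hm1 hmq hgm hr.1.le hr.2⟩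

lemma memhinf_of_norm_le_integral (hg : HarmonicOnD g)
    (hm : MemLp m ⊤ (volume.restrict (Ioc 0 (2 * π))))
    (hgm : ∀ w, ‖w‖ < 1 → ‖g w‖ ≤ ∫ t, m t ∂poissonMeasure w) : Memhinf g := by
  refine ⟨hg, lpNorm m ⊤ (volume.restrict (Ioc 0 (2 * π))), fun z hz ↦ ?_⟩
  rw [mem_ball_zero_iff] at hz
  have hprob := isProbabilityMeasure_poissonMeasure hz
  have hbound := (poissonMeasure_absolutelyContinuous z).ae_le (ae_le_lpNorm_exponent_top hm)
  calc ‖g z‖ ≤ ∫ t, m t ∂poissonMeasure z := hgm z hz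
    _ ≤ ‖∫ t, m t ∂poissonMeasure z‖ := Real.le_norm_self _
    _ ≤ _ := by simpa using norm_integral_le_of_norm_le_const hbound

lemma eLpNorm_circle_le_of_Mp_le (hp : p ≠ 0) (hp' : p ≠ ⊤) (hg : ContinuousOn g (ball 0 1))
    (h0 : 0 ≤ r) (h1 : r < 1) {M : ℝ} (hM : Mp p.toReal g r ≤ M) :
    eLpNorm (fun t : ℝ ↦ g (r * cexp (t * I))) p (volume.restrict (Ioc 0 (2 * π))) ≤
      ENNReal.ofReal ((2 * π) ^ p.toReal⁻¹ * M) := by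
  have hcircle := continuous_comp_circle hg h0 h1
  have hint : Integrable (fun t : ℝ ↦ ‖g (r * cexp (t * I))‖ ^ p.toReal)
      (volume.restrict (Ioc 0 (2 * π))) :=
    (hcircle.norm.rpow_const fun _ ↦ .inr ENNReal.toReal_nonneg).integrableOn_Ioc
  rw [((integrable_norm_rpow_iff hcircle.aestronglyMeasurable hp hp').1
    hint).eLpNorm_eq_integral_rpow_norm hp hp']
  rw [Mp, intervalIntegral.integral_of_le Real.two_pi_pos.le, one_div p.toReal,
    Real.mul_rpow (by positivity) (integral_nonneg fun t ↦ by positivity),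
    Real.div_rpow zero_le_one Real.two_pi_pos.le, Real.one_rpow] at hM
  refine ENNReal.ofReal_le_ofReal ?_
  rwa [one_div_mul_eq_div, div_le_iff₀' (by positivity)] at hM

lemma memLpT_of_tendsto (hg : ContinuousOn g (ball 0 1))
    (hlim : ∀ᵐ θ : ℝ, Tendsto (fun r : ℝ ↦ g (r * cexp (θ * I))) (𝓝[<] 1) (𝓝 (ψ θ)))
    {C : ℝ≥0∞} (hC : C ≠ ⊤) (hgC : ∀ r ∈ Ioo (0 : ℝ) 1,
      eLpNorm (fun t : ℝ ↦ g (r * cexp (t * I))) p (volume.restrict (Ioc 0 (2 * π))) ≤ C) :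
    MemLpT p ψ := by
  obtain ⟨r, -, hr, hr1⟩ := exists_seq_strictMono_tendsto' (zero_lt_one' ℝ)
  have hmeas (k : ℕ) : AEStronglyMeasurable (fun t : ℝ ↦ g (r k * cexp (t * I)))
      (volume.restrict (Ioc 0 (2 * π))) :=
    (continuous_comp_circle hg (hr k).1.le (hr k).2).aestronglyMeasurable
  have hr1' : Tendsto r atTop (𝓝[<] 1) :=
    tendsto_nhdsWithin_iff.2 ⟨hr1, .of_forall fun k ↦ (hr k).2⟩
  have hseq : ∀ᵐ θ : ℝ ∂volume.restrict (Ioc 0 (2 * π)),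
      Tendsto (fun k ↦ g (r k * cexp (θ * I))) atTop (𝓝 (ψ θ)) :=
    (ae_restrict_of_ae hlim).mono fun θ hθ ↦ hθ.comp hr1'
  refine ⟨aestronglyMeasurable_of_tendsto_ae atTop hmeas hseq, ?_⟩
  exact ((Lp.eLpNorm_lim_le_liminf_eLpNorm hmeas ψ hseq).trans
    (liminf_le_of_frequently_le' (.of_forall fun k ↦ hgC _ (hr k)))).trans_lt hC.lt_top

lemma memLpT_of_memhp (hp : 1 ≤ p) (hp' : p ≠ ⊤) (hg : Memhp p.toReal g)
    (hlim : ∀ᵐ θ : ℝ, Tendsto (fun r : ℝ ↦ g (r * cexp (θ * I))) (𝓝[<] 1) (𝓝 (ψ θ))) :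
    MemLpT p ψ := by
  obtain ⟨hharm, M, hM⟩ := hg
  exact memLpT_of_tendsto hharm.1.continuousOn hlim ENNReal.ofReal_ne_top fun r hr ↦
    eLpNorm_circle_le_of_Mp_le (zero_lt_one.trans_le hp).ne' hp' hharm.1.continuousOn hr.1.le hr.2
      (hM r hr)

lemma memLpT_of_memhinf (hg : Memhinf g)
    (hlim : ∀ᵐ θ : ℝ, Tendsto (fun r : ℝ ↦ g (r * cexp (θ * I))) (𝓝[<] 1) (𝓝 (ψ θ))) :
    MemLpT ⊤ ψ := by
  obtain ⟨hharm, M, hM⟩ := hg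
  refine memLpT_of_tendsto hharm.1.continuousOn hlim (ENNReal.ofReal_ne_top (r := M)) fun r hr ↦ ?_
  rw [eLpNorm_exponent_top]
  exact eLpNormEssSup_le_of_ae_bound (.of_forall fun t ↦
    hM _ (by simpa using norm_ofReal_mul_exp_lt_one hr.1.le hr.2 t))

end HardySpace

section Main

variable {F : ℂ → ℂ} {Fd HF : ℝ → ℂ}

lemma harmonicOnD_rFr_poissonInt (hF : IsACDeriv F Fd) : HarmonicOnD (rFr (poissonInt F)) :=
  harmonicOnD_congr (harmonicOnD_conjPoissonIntR (hF.1 _ _)) fun _ hz ↦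
    rFr_poissonInt hF (by simpa using hz)

lemma ae_tendsto_rFr_poissonInt (hF : IsACDeriv F Fd)
    (hHF : ∀ᵐ θ : ℝ, IsPVHilbert Fd θ (HF θ)) :
    ∀ᵐ θ : ℝ, Tendsto (fun r : ℝ ↦ rFr (poissonInt F) (r * cexp (θ * I))) (𝓝[<] 1) (𝓝 (HF θ)) := by
  filter_upwards [ae_tendsto_conjPoissonIntR_of_isPVHilbert hF.1 hF.2.1, hHF] with θ hlim hθ
  refine (hlim _ hθ).congr' ?_
  filter_upwards [Ioo_mem_nhdsLT zero_lt_one] with r hr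
  exact (rFr_poissonInt hF (norm_ofReal_mul_exp_lt_one hr.1.le hr.2 θ)).symm

lemma norm_rFr_poissonInt_le (hF : IsACDeriv F Fd) (hHF : ∀ᵐ θ : ℝ, IsPVHilbert Fd θ (HF θ))
    (hHF1 : IntervalIntegrable HF volume 0 (2 * π)) {z : ℂ} (hz : ‖z‖ < 1) :
    ‖rFr (poissonInt F) z‖ ≤ ∫ t, (‖Fd t‖ + ‖HF t‖) ∂poissonMeasure z := by
  rw [rFr_poissonInt hF hz]
  refine norm_conjPoissonIntR_le (hF.1 _ _) hHF1 ?_ hz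
  filter_upwards [ae_tendsto_conjPoissonIntR_of_isPVHilbert hF.1 hF.2.1, hHF] with θ hlim hθ
  exact hlim _ hθ

theorem stmt4_general {p : ℝ≥0∞} (hp : 1 ≤ p) (hF : IsACDeriv F Fd) (hLp : MemLpT p Fd)
    (hHF : ∀ᵐ θ : ℝ, IsPVHilbert Fd θ (HF θ)) :
    (p ≠ ⊤ → (Memhp p.toReal (rFr (poissonInt F)) ↔ MemLpT p HF)) ∧
    (p = ⊤ → (Memhinf (rFr (poissonInt F)) ↔ MemLpT p HF)) := by
  have hharm := harmonicOnD_rFr_poissonInt hF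
  have hlim := ae_tendsto_rFr_poissonInt hF hHF
  have hbound (h : MemLpT p HF) (w : ℂ) (hw : ‖w‖ < 1) :=
    norm_rFr_poissonInt_le hF hHF ((intervalIntegrable_iff_integrableOn_Ioc_of_le
      Real.two_pi_pos.le).2 (h.integrable hp)) hw
  have hsum (h : MemLpT p HF) := hLp.norm.add h.norm
  constructor
  · exact fun hp' ↦ ⟨fun h ↦ memLpT_of_memhp hp hp' h hlim, fun h ↦
      memhp_of_norm_le_integral hp hp' hharm (fun t ↦ add_nonneg (norm_nonneg _) (norm_nonneg _))
        (hsum h) (hbound h)⟩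
  · rintro rfl
    exact ⟨fun h ↦ memLpT_of_memhinf h hlim, fun h ↦
      memhinf_of_norm_le_integral hharm (hsum h) (hbound h)⟩

end Main

/-- For `p = 1` or `p = ∞`, `F : 𝕋 → ℂ` absolutely continuous with
`Ḟ ∈ L^p(𝕋)` and `f = P[F]`, the function `z ↦ r f_r(z)` belongs to `h^p(𝔻)` iff the
Hilbert transform `H(Ḟ)` belongs to `L^p(𝕋)`. -/
theorem stmt4 (p : ℝ≥0∞) (hp : p = 1 ∨ p = ⊤) (F : ℂ → ℂ) (Fd HF : ℝ → ℂ)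
    (hF : IsACDeriv F Fd) (hLp : MemLpT p Fd)
    (hHF : ∀ᵐ θ : ℝ, IsPVHilbert Fd θ (HF θ)) :
    (p = 1 → (Memhp 1 (rFr (poissonInt F)) ↔ MemLpT 1 HF)) ∧
    (p = ⊤ → (Memhinf (rFr (poissonInt F)) ↔ MemLpT ⊤ HF)) := by
  have hgeneral := stmt4_general (by rcases hp with rfl | rfl <;> simp) hF hLp hHF
  exact ⟨fun h ↦ by simpa [h] using hgeneral.1, fun h ↦ by simpa [h] using hgeneral.2⟩

end
end

section
/- Let F : 𝕋 → ℂ be absolutely continuous and let f = P[F] be its Poisson integral. Then for every z ∈ 𝔻, f_z(z) = (1/(2πi)) ∫₀^{2π} Ḟ(e^{it}) / (e^{it} − z) dt. -/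
open MeasureTheory Complex Metric Set Filter
open scoped Real Topology ENNReal

noncomputable section

/-! The real part of the Herglotz-Riesz kernel `(w + z) / (w - z)` is the Poisson kernel, so on the
disk `P[F]` is the sum of half the Herglotz integral of `F` and the conjugate of half the Herglotz
integral of `conj F`. Both Herglotz integrals are holomorphic in `z`, hence only the first one
contributes to the Wirtinger derivative, and differentiating its kernel gives
`f_z(z) = (1/2π) ∫ e^{it} / (e^{it} - z)² F(e^{it}) dt`. Since `e^{it} / (e^{it} - z)²` is `i` times
the `t`-derivative of `1 / (e^{it} - z)`, an integration by parts moves the derivative onto `F`; the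
boundary terms cancel because both factors are functions of the point `e^{it}`. -/

section

open Real (circleAverage)
open scoped ComplexConjugate

variable {X Y E : Type*} [PseudoMetricSpace X] [PseudoMetricSpace Y]
  [NormedAddCommGroup E] [NormedSpace ℝ E]

lemma absolutelyContinuousOnInterval_of_dist_le {f : ℝ → X} {g : ℝ → Y} {a b : ℝ}
    (hg : AbsolutelyContinuousOnInterval g a b)
    (hfg : ∀ x ∈ uIcc a b, ∀ y ∈ uIcc a b, dist (f x) (f y) ≤ dist (g x) (g y)) :
    AbsolutelyContinuousOnInterval f a b := by
  rw [absolutelyContinuousOnInterval_iff] at hg ⊢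
  intro ε hε
  obtain ⟨δ, hδ, hgδ⟩ := hg ε hε
  refine ⟨δ, hδ, fun I hI hlen ↦ (Finset.sum_le_sum fun i hi ↦ ?_).trans_lt (hgδ I hI hlen)⟩
  exact hfg _ (hI.1 i hi).1 _ (hI.1 i hi).2

lemma absolutelyContinuousOnInterval_intervalIntegral {f : ℝ → E} {a b c : ℝ}
    (hf : IntervalIntegrable f volume a b) (hc : c ∈ uIcc a b) :
    AbsolutelyContinuousOnInterval (fun x ↦ ∫ t in c..x, f t) a b := by
  refine absolutelyContinuousOnInterval_of_dist_le
    (hf.norm.absolutelyContinuousOnInterval_intervalIntegral hc) fun x hx y hy ↦ ?_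
  have hint {u v : ℝ} (hu : u ∈ uIcc a b) (hv : v ∈ uIcc a b) :
      IntervalIntegrable f volume u v := hf.mono_set (uIcc_subset_uIcc hu hv)
  simpa only [dist_eq_norm, Real.norm_eq_abs,
    intervalIntegral.integral_interval_sub_left (hint hc hx) (hint hc hy),
    intervalIntegral.integral_interval_sub_left (hint hc hx).norm (hint hc hy).norm]
    using intervalIntegral.norm_integral_le_abs_integral_norm

lemma integral_eq_sub_of_absolutelyContinuousOnInterval [CompleteSpace E] {f f' : ℝ → E} {a b : ℝ}
    (hf : AbsolutelyContinuousOnInterval f a b) (hf' : IntervalIntegrable f' volume a b)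
    (hderiv : ∀ᵐ x, x ∈ uIcc a b → HasDerivAt f (f' x) x) :
    ∫ x in a..b, f' x = f b - f a := by
  have hconst : ∀ᵐ x, x ∈ uIcc a b → HasDerivAt (fun x ↦ f x - ∫ t in a..x, f' t) 0 x := by
    filter_upwards [hderiv, hf'.ae_hasDerivAt_integral] with x hfx hprim hx
    simpa using! (hfx hx).sub (hprim hx a left_mem_uIcc)
  have hAC := hf.fun_sub (absolutelyContinuousOnInterval_intervalIntegral hf' left_mem_uIcc)
  obtain ⟨C, hC⟩ := hAC.const_of_ae_hasDerivAt_zero hconst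
  have hab := (hC b right_mem_uIcc).trans (hC a left_mem_uIcc).symm
  rw [intervalIntegral.integral_same, sub_zero] at hab
  rw [← hab, sub_sub_cancel]

lemma integral_smul_eq_sub_of_absolutelyContinuousOnInterval {𝕜 : Type*} [RCLike 𝕜]
    [NormedSpace 𝕜 E] [IsScalarTower ℝ 𝕜 E] [CompleteSpace E] {u u' : ℝ → 𝕜} {v v' : ℝ → E}
    {a b : ℝ} (hu : AbsolutelyContinuousOnInterval u a b)
    (hv : AbsolutelyContinuousOnInterval v a b) (hu' : IntervalIntegrable u' volume a b)
    (hv' : IntervalIntegrable v' volume a b)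
    (hu_deriv : ∀ᵐ x, x ∈ uIcc a b → HasDerivAt u (u' x) x)
    (hv_deriv : ∀ᵐ x, x ∈ uIcc a b → HasDerivAt v (v' x) x) :
    ∫ x in a..b, u x • v' x = u b • v b - u a • v a - ∫ x in a..b, u' x • v x := by
  have huv' : IntervalIntegrable (fun x ↦ u x • v' x) volume a b :=
    hv'.continuousOn_smul hu.continuousOn
  have hu'v : IntervalIntegrable (fun x ↦ u' x • v x) volume a b :=
    hu'.smul_continuousOn hv.continuousOn
  have hderiv : ∀ᵐ x, x ∈ uIcc a b →
      HasDerivAt (fun x ↦ u x • v x) (u x • v' x + u' x • v x) x := by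
    filter_upwards [hu_deriv, hv_deriv] with x hux hvx hx
    exact (hux hx).smul (hvx hx)
  rw [eq_sub_iff_add_eq, ← intervalIntegral.integral_add huv' hu'v]
  exact integral_eq_sub_of_absolutelyContinuousOnInterval (hu.fun_smul hv) (huv'.add hu'v) hderiv

namespace IsACDeriv

variable {F : ℂ → ℂ} {Fd : ℝ → ℂ}

lemma comp_circleMap (hF : IsACDeriv F Fd) :
    (fun t ↦ F (circleMap 0 1 t)) = fun t ↦ F 1 + ∫ s in (0 : ℝ)..t, Fd s := by
  ext t
  simpa [circleMap_zero] using hF.2.2 t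

lemma circleIntegrable (hF : IsACDeriv F Fd) : CircleIntegrable F 0 1 := by
  rw [circleIntegrable_def, hF.comp_circleMap]
  exact (continuous_const.add
    (intervalIntegral.continuous_primitive hF.1 0)).intervalIntegrable _ _

lemma absolutelyContinuousOnInterval (hF : IsACDeriv F Fd) {b : ℝ} :
    AbsolutelyContinuousOnInterval (fun t ↦ F (circleMap 0 1 t)) 0 b := by
  rw [hF.comp_circleMap]
  refine absolutelyContinuousOnInterval_of_dist_le
    (absolutelyContinuousOnInterval_intervalIntegral (hF.1 0 b) left_mem_uIcc) fun x _ y _ ↦ ?_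
  rw [dist_add_left]

lemma ae_hasDerivAt (hF : IsACDeriv F Fd) {b : ℝ} :
    ∀ᵐ t, t ∈ uIcc 0 b → HasDerivAt (fun t ↦ F (circleMap 0 1 t)) (Fd t) t := by
  rw [hF.comp_circleMap]
  filter_upwards [(hF.1 0 b).ae_hasDerivAt_integral] with t ht htb
  exact (ht htb 0 left_mem_uIcc).const_add _

lemma integral_comp_circleMap_mul (hF : IsACDeriv F Fd) {g g' : ℂ → ℂ}
    (hg : ∀ w ∈ sphere (0 : ℂ) 1, HasDerivAt g (g' w) w)
    (hg' : ContinuousOn g' (sphere (0 : ℂ) 1)) :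
    ∫ t in (0 : ℝ)..2 * π, g (circleMap 0 1 t) * Fd t =
      -∫ t in (0 : ℝ)..2 * π,
        circleMap 0 1 t * I * g' (circleMap 0 1 t) * F (circleMap 0 1 t) := by
  have hmem (t : ℝ) : circleMap 0 1 t ∈ sphere (0 : ℂ) 1 := circleMap_mem_sphere 0 zero_le_one t
  have hderiv (t : ℝ) : HasDerivAt (fun t ↦ g (circleMap 0 1 t))
      (circleMap 0 1 t * I * g' (circleMap 0 1 t)) t :=
    (hg _ (hmem t)).scomp t (hasDerivAt_circleMap 0 1 t)
  have hcont : Continuous fun t ↦ circleMap 0 1 t * I * g' (circleMap 0 1 t) :=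
    ((continuous_circleMap 0 1).mul continuous_const).mul
      (hg'.comp_continuous (continuous_circleMap 0 1) hmem)
  have hC1 : ContDiff ℝ 1 fun t ↦ g (circleMap 0 1 t) :=
    contDiff_one_iff_deriv.2 ⟨fun t ↦ (hderiv t).differentiableAt,
      (funext fun t ↦ (hderiv t).deriv) ▸ hcont⟩
  have hperiod : circleMap 0 1 (2 * π) = circleMap 0 1 0 := (periodic_circleMap 0 1).eq
  have hparts := integral_smul_eq_sub_of_absolutelyContinuousOnInterval
    hC1.contDiffOn.absolutelyContinuousOnInterval hF.absolutelyContinuousOnInterval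
    (hcont.intervalIntegrable 0 (2 * π)) (hF.1 0 (2 * π))
    (ae_of_all _ fun t _ ↦ hderiv t) hF.ae_hasDerivAt
  simpa only [smul_eq_mul, hperiod, sub_self, zero_sub] using hparts

lemma integral_div_circleMap_sub (hF : IsACDeriv F Fd) {z : ℂ} (hz : z ∉ sphere 0 1) :
    ∫ t in (0 : ℝ)..2 * π, Fd t / (circleMap 0 1 t - z) =
      2 * π * I * circleAverage (fun w ↦ w / (w - z) ^ 2 * F w) 0 1 := by
  have hne (w : ℂ) (hw : w ∈ sphere 0 1) : w - z ≠ 0 :=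
    sub_ne_zero.2 (ne_of_mem_of_not_mem hw hz)
  have hparts := hF.integral_comp_circleMap_mul (g := fun w ↦ (w - z)⁻¹)
    (g' := fun w ↦ -1 / (w - z) ^ 2)
    (fun w hw ↦ ((hasDerivAt_id w).sub_const z).inv (hne w hw))
    (continuousOn_const.div (by fun_prop) fun w hw ↦ pow_ne_zero 2 (hne w hw))
  calc ∫ t in (0 : ℝ)..2 * π, Fd t / (circleMap 0 1 t - z)
      = ∫ t in (0 : ℝ)..2 * π, (circleMap 0 1 t - z)⁻¹ * Fd t := by
        simp_rw [div_eq_inv_mul]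
    _ = ∫ t in (0 : ℝ)..2 * π,
          I * (circleMap 0 1 t / (circleMap 0 1 t - z) ^ 2 * F (circleMap 0 1 t)) := by
        rw [hparts, ← intervalIntegral.integral_neg]
        congr! 2 with t
        ring
    _ = 2 * π * I * circleAverage (fun w ↦ w / (w - z) ^ 2 * F w) 0 1 := by
        rw [intervalIntegral.integral_const_mul, Real.circleAverage_def, real_smul]
        push_cast
        field_simp

end IsACDeriv

lemma wdz_add_conj {f g h : ℂ → ℂ} {g' z : ℂ} (hf : f =ᶠ[𝓝 z] fun w ↦ g w + conj (h w))
    (hg : HasDerivAt g g' z) (hh : DifferentiableAt ℂ h z) : wdz f z = g' := by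
  have hfderiv := ((hg.hasFDerivAt.restrictScalars ℝ).add
    (conjCLE.toContinuousLinearMap.hasFDerivAt.comp z
      (hh.hasDerivAt.hasFDerivAt.restrictScalars ℝ))).congr_of_eventuallyEq hf
  rw [wdz, hfderiv.fderiv]
  simp only [one_div, add_apply, ContinuousLinearMap.coe_restrictScalars',
    ContinuousLinearMap.toSpanSingleton_apply, smul_eq_mul, one_mul, ContinuousLinearMap.comp_apply,
    ContinuousLinearEquiv.coe_coe, ContinuousAlgEquiv.coeCLE_apply, conjCAE_apply, map_mul, conj_I,
    neg_mul]
  linear_combination (conj (deriv h z) - g') / 2 * I_sq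

lemma poissonInt_eq_circleAverage (F : ℂ → ℂ) (z : ℂ) :
    poissonInt F z = circleAverage (fun w ↦ (poissonKernel 0 z w : ℂ) * F w) 0 1 := by
  have hker (t : ℝ) : poissonKer (z * exp (-(t * I))) = poissonKernel 0 z (exp (t * I)) := by
    have hfactor : exp (t * I) - z = exp (t * I) * (1 - z * exp (-(t * I))) := by
      rw [mul_sub, mul_left_comm, ← Complex.exp_add, add_neg_cancel, Complex.exp_zero,
        mul_one, mul_one]
    have hnorm : ‖exp (-(t * I))‖ = 1 := by
      rw [Complex.exp_neg, norm_inv, norm_exp_ofReal_mul_I, inv_one]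
    simp [poissonKer, poissonKernel_def, hfactor, hnorm, norm_exp_ofReal_mul_I]
  simp [poissonInt, Real.circleAverage_def, circleMap_zero, neg_mul, hker]

lemma circleIntegrable_conj {F : ℂ → ℂ} {c : ℂ} {R : ℝ} (hF : CircleIntegrable F c R) :
    CircleIntegrable (fun w ↦ conj (F w)) c R :=
  ⟨conjCLE.toContinuousLinearMap.integrable_comp hF.1,
    conjCLE.toContinuousLinearMap.integrable_comp hF.2⟩

lemma circleAverage_conj (F : ℂ → ℂ) (c : ℂ) (R : ℝ) :
    circleAverage (fun w ↦ conj (F w)) c R = conj (circleAverage F c R) := by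
  simp [Real.circleAverage_def, intervalIntegral.intervalIntegral_conj, Complex.conj_ofNat]

lemma circleAverage_poissonKernel_mul {F : ℂ → ℂ} {R : ℝ} {z : ℂ} (hF : CircleIntegrable F 0 R)
    (hz : z ∈ ball 0 R) :
    circleAverage (fun w ↦ (poissonKernel 0 z w : ℂ) * F w) 0 R =
      circleAverage (fun w ↦ herglotzRieszKernel 0 z w • F w) 0 R / 2 +
        conj (circleAverage (fun w ↦ herglotzRieszKernel 0 z w • conj (F w)) 0 R / 2) := by
  have hker := continuousOn_herglotzRieszKernel_sphere hz
  have hre (w : ℂ) : (poissonKernel 0 z w : ℂ) * F w =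
      (1 / 2 : ℂ) • (herglotzRieszKernel 0 z w • F w +
        conj (herglotzRieszKernel 0 z w • conj (F w))) := by
    simp only [poissonKernel_eq_re_herglotzRieszKernel, Function.comp_apply, re_eq_add_conj,
      smul_eq_mul, map_mul, conj_conj]
    ring
  simp_rw [hre]
  rw [Real.circleAverage_fun_smul, Real.circleAverage_fun_add (hF.fun_continuousOn_smul hker)
    (circleIntegrable_conj ((circleIntegrable_conj hF).fun_continuousOn_smul hker)),
    circleAverage_conj, map_div₀, map_ofNat, smul_eq_mul]
  ring

lemma wdz_poissonInt {F : ℂ → ℂ} {z : ℂ} (hF : CircleIntegrable F 0 1) (hz : z ∈ ball 0 1) :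
    wdz (poissonInt F) z = circleAverage (fun w ↦ w / (w - z) ^ 2 * F w) 0 1 := by
  have hdecomp : poissonInt F =ᶠ[𝓝 z] fun z ↦
      circleAverage (fun w ↦ herglotzRieszKernel 0 z w • F w) 0 1 / 2 +
        conj (circleAverage (fun w ↦ herglotzRieszKernel 0 z w • conj (F w)) 0 1 / 2) := by
    filter_upwards [isOpen_ball.mem_nhds hz] with z hz
    rw [poissonInt_eq_circleAverage, circleAverage_poissonKernel_mul hF hz]
  have hholo := (hasDerivAt_circleAverage_herglotzRieszKernel_smul hF hz).div_const 2
  have hconj := (hasDerivAt_circleAverage_herglotzRieszKernel_smul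
    (circleIntegrable_conj hF) hz).div_const 2
  rw [wdz_add_conj hdecomp hholo hconj.differentiableAt, div_eq_inv_mul, ← smul_eq_mul,
    ← Real.circleAverage_fun_smul]
  congr! 2 with w
  simp only [smul_eq_mul]
  ring

end

/-- For `F : 𝕋 → ℂ` absolutely continuous and `f = P[F]`, for every
`z ∈ 𝔻`, `f_z(z) = (1/(2πi)) ∫₀^{2π} Ḟ(e^{it})/(e^{it} - z) dt`. -/
theorem stmt5 (F : ℂ → ℂ) (Fd : ℝ → ℂ) (hF : IsACDeriv F Fd) :
    ∀ z ∈ ball (0:ℂ) 1,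
      wdz (poissonInt F) z
        = (1 / (2 * (π : ℂ) * Complex.I)) *
            ∫ t in (0:ℝ)..(2 * π), Fd t / (Complex.exp ((t : ℂ) * Complex.I) - z) := by
  intro z hz
  have hcircle : z ∉ sphere 0 1 := fun h ↦ (mem_ball.1 hz).ne h
  have hFd := hF.integral_div_circleMap_sub hcircle
  simp only [circleMap_zero, ofReal_one, one_mul] at hFd
  rw [wdz_poissonInt hF.circleIntegrable hz, hFd, one_div, inv_mul_cancel_left₀ two_pi_I_ne_zero]

end
end
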